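/- arXiv:2205.13538 — 13 statements merged into one kernel-verified Lean document; each statement's English description precedes it below -/
import Mathlib

section
/- Let d ≥ 2 be an integer and let w ∈ {0,1}^d be a winning vector with binary entries, and set K = |{i ∈ {1,…,d} : w_i = 1}|. Then the supremum of ℐ_w(π) over π ∈ Δ_d equals 0 if K = 0, equals ln(K + (d − K)·d^{−d/(d−K)}) if 0 < K < d, and equals ln d if K = d. -/
/-- The standard simplex Δ_d: nonnegative entries summing to 1. -/
def inSimplex {d : ℕ} (p : Fin d → ℝ) : Prop :=
  (∀ i, 0 ≤ p i) ∧ ∑ i, p i = 1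

/-- The output distribution W̄π with W̄_{ij} = w_i δ_{ij} + (1 − w_j)/d. -/
noncomputable def Wbar {d : ℕ} (w p : Fin d → ℝ) (i : Fin d) : ℝ :=
  w i * p i + (∑ j, (1 - w j) * p j) / d

/-- The mutual information ℐ_w(π) = H(W̄π) + ⟨π, w⟩ ln d − ln d, entropy in nats. -/
noncomputable def mutInfo {d : ℕ} (w p : Fin d → ℝ) : ℝ :=
  (∑ i, Real.negMulLog (Wbar w p i)) + (∑ i, p i * w i) * Real.log d - Real.log d

lemma sum_ite_w {d : ℕ} (w : Fin d → ℝ) (K : ℕ)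
    (hK : K = (Finset.univ.filter (fun i => w i = 1)).card) (a b : ℝ) :
    ∑ i, (if w i = 1 then a else b) = K * a + ((d : ℝ) - K) * b := by
  have h1 : (Finset.univ.filter (fun i => w i = 1)).card
      + (Finset.univ.filter (fun i => ¬ w i = 1)).card = d := by
    rw [Finset.card_filter_add_card_filter_not]; simp
  have h2 : ((Finset.univ.filter (fun i => ¬ w i = 1)).card : ℝ) = (d : ℝ) - K := by
    rw [← hK] at h1
    have : ((K + (Finset.univ.filter (fun i => ¬ w i = 1)).card : ℕ) : ℝ) = d := by rw [h1]
    push_cast at this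
    linarith
  rw [Finset.sum_ite, Finset.sum_const, Finset.sum_const, nsmul_eq_mul, nsmul_eq_mul, h2, ← hK]

lemma gibbs_pt (q c Z : ℝ) (hq : 0 ≤ q) (hc : 0 < c) (hZ : 0 < Z) :
    Real.negMulLog q + q * Real.log c ≤ q * Real.log Z + c / Z - q := by
  rcases hq.eq_or_lt with rfl | hq
  · simp; positivity
  have h := Real.log_le_sub_one_of_pos (show 0 < c / Z / q by positivity)
  rw [Real.log_div (by positivity) (by positivity), Real.log_div (by positivity) (by positivity)] at h
  have h2 := mul_le_mul_of_nonneg_left h hq.le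
  have h3 : q * (c / Z / q - 1) = c / Z - q := by field_simp
  rw [h3] at h2
  unfold Real.negMulLog
  linarith

lemma gibbs_eq (c Z : ℝ) (hc : 0 < c) (hZ : 0 < Z) :
    Real.negMulLog (c / Z) + c / Z * Real.log c = c / Z * Real.log Z := by
  unfold Real.negMulLog
  rw [Real.log_div (by positivity) (by positivity)]
  ring

lemma sSup_gen (d : ℕ) (hd : 2 ≤ d) (w : Fin d → ℝ)
    (hw : ∀ i, w i = 0 ∨ w i = 1)
    (K : ℕ) (hK : K = (Finset.univ.filter (fun i => w i = 1)).card) :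
    sSup {y | ∃ p : Fin d → ℝ, inSimplex p ∧ y = mutInfo w p} =
      Real.log ((K : ℝ) + ((d : ℝ) - K) * (d : ℝ) ^ (-(d : ℝ) / ((d : ℝ) - K))) := by
  have hKd : K ≤ d := by
    rw [hK]; exact (Finset.card_le_univ _).trans (by simp)
  have hKd' : (K : ℝ) ≤ d := by exact_mod_cast hKd
  have hd2 : (2 : ℝ) ≤ d := by exact_mod_cast hd
  have hd0 : (0 : ℝ) < d := by linarith
  set c : ℝ := (d : ℝ) ^ (-(d : ℝ) / ((d : ℝ) - K)) with hc
  have hc0 : 0 < c := Real.rpow_pos_of_pos hd0 _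
  have hc1 : c ≤ 1 := by
    apply Real.rpow_le_one_of_one_le_of_nonpos (by linarith)
    exact div_nonpos_of_nonpos_of_nonneg (by linarith) (by linarith)
  have hlogc : (K : ℝ) ≠ d → ((d : ℝ) - K) * Real.log c = - d * Real.log d := by
    intro h
    have : (d : ℝ) - K ≠ 0 := fun h' => h (by linarith)
    rw [hc, Real.log_rpow hd0]
    field_simp
  set Z : ℝ := (K : ℝ) + ((d : ℝ) - K) * c with hZ
  have hZ0 : 0 < Z := by
    have hK0 : (0 : ℝ) ≤ K := Nat.cast_nonneg K
    rcases hKd'.eq_or_lt with h | h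
    · rw [hZ, h]; simpa using hd0
    · have : 0 < ((d : ℝ) - K) * c := mul_pos (by linarith) hc0
      linarith
  have hall : (K : ℝ) = d → ∀ i, w i = 1 := by
    intro h i
    have h' : (Finset.univ.filter (fun i => w i = 1)).card = (Finset.univ : Finset (Fin d)).card := by
      rw [← hK]; simpa using (by exact_mod_cast h : K = d)
    have := (Finset.card_filter_eq_iff.mp h') i (Finset.mem_univ i)
    exact this
  -- normal form of mutual information
  have hsumW : ∀ p : Fin d → ℝ, inSimplex p → ∑ i, Wbar w p i = 1 := by
    intro p hp
    unfold Wbar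
    rw [Finset.sum_add_distrib, Finset.sum_const, Finset.card_univ, Fintype.card_fin, nsmul_eq_mul,
      mul_div_cancel₀ _ hd0.ne', ← Finset.sum_add_distrib]
    refine Eq.trans ?_ hp.2
    exact Finset.sum_congr rfl fun i _ => by ring
  have hform : ∀ p : Fin d → ℝ, inSimplex p → mutInfo w p =
      ∑ i, (Real.negMulLog (Wbar w p i) + Wbar w p i * Real.log (if w i = 1 then 1 else c)) := by
    intro p hp
    set b := ∑ j, (1 - w j) * p j with hb
    have h1 : ∑ i, p i * w i = 1 - b := by
      rw [eq_sub_iff_add_eq, hb, ← Finset.sum_add_distrib]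
      refine Eq.trans ?_ hp.2
      exact Finset.sum_congr rfl fun i _ => by ring
    have h2 : ∑ i, Wbar w p i * Real.log (if w i = 1 then 1 else c)
        = ∑ i, if w i = 1 then 0 else b / d * Real.log c := by
      refine Finset.sum_congr rfl fun i _ => ?_
      rcases hw i with h | h
      · simp [h, Wbar, ← hb]
      · simp [h]
    rw [Finset.sum_add_distrib, h2, sum_ite_w w K hK]
    unfold mutInfo
    rw [h1]
    have h3 : ((d : ℝ) - K) * (b / d * Real.log c) = - b * Real.log d := by
      by_cases h : (K : ℝ) = d
      · have : b = 0 := by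
          rw [hb]; exact Finset.sum_eq_zero fun i _ => by rw [hall h i]; ring
        simp [this]
      · have e : ((d : ℝ) - K) * (b / d * Real.log c) = b / d * (((d : ℝ) - K) * Real.log c) := by ring
        rw [e, hlogc h]
        field_simp
    rw [h3]; ring
  have hsumc : ∑ i, (if w i = 1 then 1 else c) / Z = 1 := by
    rw [← Finset.sum_div, sum_ite_w w K hK, mul_one, ← hZ, div_self hZ0.ne']
  have hcpos : ∀ i, 0 < (if w i = 1 then 1 else c) := by
    intro i; split_ifs <;> [norm_num; exact hc0]
  apply IsGreatest.csSup_eq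
  constructor
  · set p : Fin d → ℝ := fun i => if w i = 1 then (if (K : ℝ) = d then 1 / Z else (1 - c) / Z)
      else d * c / (((d : ℝ) - K) * Z) with hpdef
    have hp : inSimplex p := by
      constructor
      · intro i
        have h1 : 0 ≤ 1 - c := by linarith
        have h2 : 0 ≤ (d : ℝ) - K := by linarith
        simp only [hpdef]
        split_ifs <;> positivity
      · rw [hpdef, sum_ite_w w K hK]
        split_ifs with h
        · rw [hZ, h]; simp; field_simp
        · have : (d : ℝ) - K ≠ 0 := fun h' => h (by linarith)
          have hz := hZ0.ne'
          field_simp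
          rw [hZ]; ring
    have hb : (∑ j, (1 - w j) * p j) = if (K : ℝ) = d then 0 else d * c / Z := by
      have : ∀ j, (1 - w j) * p j = if w j = 1 then 0 else d * c / (((d : ℝ) - K) * Z) := by
        intro j
        rcases hw j with h | h <;> simp [h, hpdef]
      simp only [this]
      rw [sum_ite_w w K hK]
      split_ifs with h
      · simp [h]
      · have : (d : ℝ) - K ≠ 0 := fun h' => h (by linarith)
        field_simp
        ring
    have hq : ∀ i, Wbar w p i = (if w i = 1 then 1 else c) / Z := by
      intro i
      unfold Wbar
      rw [hb]
      by_cases h : (K : ℝ) = d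
      · simp [h, hall h i, hpdef]
      · rcases hw i with h' | h'
        · simp [h, h']; field_simp
        · simp [h, h', hpdef]; field_simp; ring
    refine ⟨p, hp, ?_⟩
    rw [hform p hp]
    have : ∀ i, Real.negMulLog (Wbar w p i) + Wbar w p i * Real.log (if w i = 1 then 1 else c)
        = (if w i = 1 then 1 else c) / Z * Real.log Z := by
      intro i
      rw [hq i]
      exact gibbs_eq _ _ (hcpos i) hZ0
    simp only [this]
    rw [← Finset.sum_mul, hsumc, one_mul]
  · rintro y ⟨p, hp, rfl⟩
    rw [hform p hp]
    have hq0 : ∀ i, 0 ≤ Wbar w p i := by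
      intro i
      have hb : 0 ≤ ∑ j, (1 - w j) * p j := Finset.sum_nonneg fun j _ =>
        mul_nonneg (by rcases hw j with h | h <;> simp [h]) (hp.1 j)
      have hi : 0 ≤ w i * p i := mul_nonneg (by rcases hw i with h | h <;> simp [h]) (hp.1 i)
      unfold Wbar
      positivity
    refine (Finset.sum_le_sum fun i _ => gibbs_pt _ _ Z (hq0 i) (hcpos i) hZ0).trans ?_
    rw [Finset.sum_sub_distrib, Finset.sum_add_distrib, ← Finset.sum_mul, hsumc, hsumW p hp]
    simp

theorem stmt0 (d : ℕ) (hd : 2 ≤ d) (w : Fin d → ℝ)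
    (hw : ∀ i, w i = 0 ∨ w i = 1)
    (K : ℕ) (hK : K = (Finset.univ.filter (fun i => w i = 1)).card) :
    sSup {y | ∃ p : Fin d → ℝ, inSimplex p ∧ y = mutInfo w p} =
      if K = 0 then 0
      else if K = d then Real.log d
      else Real.log ((K : ℝ) + ((d : ℝ) - K) * (d : ℝ) ^ (-(d : ℝ) / ((d : ℝ) - K))) := by
  rw [sSup_gen d hd w hw K hK]
  have hd0 : (d : ℝ) ≠ 0 := by
    have : d ≠ 0 := by omega
    exact_mod_cast this
  split_ifs with h1 h2
  · have : -(d : ℝ) / ((d : ℝ) - (K : ℝ)) = -1 := by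
      rw [h1]; simp [neg_div, div_self hd0]
    rw [this, h1, Real.rpow_neg_one]
    simp [mul_inv_cancel₀ hd0]
  · rw [h2]; simp
  · rfl
end

section
/- Let d ≥ 2 be an integer and w ∈ [0,1]^d. Suppose π* ∈ Δ_d attains the supremum of ℐ_w over Δ_d and that there exists an index i ∈ {1,…,d} with w_i·π*_i = 0 (equivalently, |{i : w_i π*_i ≠ 0}| < d). Then sup_{π ∈ Δ_d} ℐ_w(π) ≤ ln(d − 1 + d^{−d}). -/
lemma gibbs_term (q a : ℝ) (hq : 0 ≤ q) (ha : 0 < a) :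
    Real.negMulLog q + q * Real.log a ≤ a - q := by
  rcases hq.eq_or_lt with h | h
  · subst h; simp [ha.le]
  · have h1 := Real.log_le_sub_one_of_pos (div_pos ha h)
    rw [Real.log_div ha.ne' h.ne'] at h1
    have h2 := mul_le_mul_of_nonneg_left h1 hq
    have h3 : q * (a / q - 1) = a - q := by field_simp
    rw [h3] at h2
    unfold Real.negMulLog
    linarith

theorem stmt1 (d : ℕ) (hd : 2 ≤ d) (w : Fin d → ℝ)
    (hw : ∀ i, w i ∈ Set.Icc (0 : ℝ) 1)
    (pstar : Fin d → ℝ) (hpstar : inSimplex pstar)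
    (hmax : ∀ p : Fin d → ℝ, inSimplex p → mutInfo w p ≤ mutInfo w pstar)
    (hzero : ∃ i, w i * pstar i = 0) :
    sSup {y | ∃ p : Fin d → ℝ, inSimplex p ∧ y = mutInfo w p} ≤
      Real.log ((d : ℝ) - 1 + (d : ℝ) ^ (-(d : ℝ))) := by
  have hd2 : (2 : ℝ) ≤ d := by exact_mod_cast hd
  have hd0 : (0 : ℝ) < d := by linarith
  refine csSup_le ⟨mutInfo w pstar, pstar, hpstar, rfl⟩ ?_
  rintro y ⟨p, hp, rfl⟩
  refine (hmax p hp).trans ?_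
  obtain ⟨k, hk⟩ := hzero
  obtain ⟨hp0, hp1⟩ := hpstar
  have hu : 0 < (d : ℝ) ^ (-(d : ℝ)) := Real.rpow_pos_of_pos hd0 _
  have hlu : Real.log ((d : ℝ) ^ (-(d : ℝ))) = -d * Real.log d := Real.log_rpow hd0 _
  set u := (d : ℝ) ^ (-(d : ℝ))
  set Z := (d : ℝ) - 1 + u with hZ
  have hZ0 : 0 < Z := by linarith
  set s := ∑ j, (1 - w j) * pstar j with hs
  have hs0 : 0 ≤ s := Finset.sum_nonneg fun j _ =>
    mul_nonneg (sub_nonneg.2 (hw j).2) (hp0 j)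
  have hpw : ∑ i, pstar i * w i = 1 - s := by
    have h : ∑ i, pstar i * w i = ∑ i, pstar i - s := by
      rw [hs, ← Finset.sum_sub_distrib]
      exact Finset.sum_congr rfl fun i _ => by ring
    rw [h, hp1]
  have hqk : Wbar w pstar k = s / d := by
    unfold Wbar; rw [hk, zero_add]
  have hq0 : ∀ i, 0 ≤ Wbar w pstar i := fun i =>
    add_nonneg (mul_nonneg (hw i).1 (hp0 i)) (div_nonneg hs0 hd0.le)
  have hqsum : ∑ i, Wbar w pstar i = 1 := by
    unfold Wbar
    rw [Finset.sum_add_distrib, Finset.sum_const, Finset.card_univ, Fintype.card_fin, nsmul_eq_mul,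
      ← hs, mul_div_cancel₀ _ hd0.ne']
    have : ∑ i, w i * pstar i = 1 - s := by
      rw [← hpw]; exact Finset.sum_congr rfl fun i _ => by ring
    linarith
  have key := Finset.sum_le_sum (s := Finset.univ) fun i _ =>
    gibbs_term (Wbar w pstar i) ((1 + if i = k then u - 1 else 0) / Z) (hq0 i)
      (div_pos (by split_ifs <;> linarith) hZ0)
  have hl : ∀ i, Wbar w pstar i * Real.log ((1 + if i = k then u - 1 else 0) / Z)
      = (if i = k then Wbar w pstar i * Real.log u else 0) - Wbar w pstar i * Real.log Z := by
    intro i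
    split_ifs with h
    · rw [Real.log_div (by linarith) hZ0.ne']; ring_nf
    · rw [Real.log_div (by norm_num) hZ0.ne']; simp
  have ha : ∑ i, (1 + if i = k then u - 1 else 0) / Z = 1 := by
    rw [← Finset.sum_div, Finset.sum_add_distrib, Finset.sum_ite_eq' Finset.univ k]
    simp only [Finset.sum_const, Finset.card_univ, Fintype.card_fin, nsmul_eq_mul,
      Finset.mem_univ, if_true]
    rw [div_eq_one_iff_eq hZ0.ne', hZ]; ring
  simp only [hl] at key
  rw [Finset.sum_add_distrib, Finset.sum_sub_distrib, Finset.sum_sub_distrib, ← Finset.sum_mul,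
    hqsum, ha, Finset.sum_ite_eq' Finset.univ k] at key
  simp only [Finset.mem_univ, if_true] at key
  rw [hqk, hlu] at key
  have h5 : s / d * (-d * Real.log d) = - s * Real.log d := by field_simp
  rw [h5] at key
  unfold mutInfo
  rw [hpw]
  linarith
end

section
/- Let d ≥ 2 be an integer and w ∈ (0,1]^d with all entries strictly positive. Suppose π* ∈ Δ_d attains the supremum of ℐ_w over Δ_d and π*_i > 0 for all i ∈ {1,…,d}. Then sup_{π ∈ Δ_d} ℐ_w(π) = ℐ*(w) = ln(Σ_{j=1}^d exp[d·w_eff·ln d·(1 − 1/w_j)]), where w_eff = (Σ_{i=1}^d 1/w_i)^{−1}. -/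
/-- The effective winning probability w_eff = (Σ_i 1/w_i)⁻¹. -/
noncomputable def weff {d : ℕ} (w : Fin d → ℝ) : ℝ := (∑ i, (w i)⁻¹)⁻¹

/-- ℐ*(w) = ln(Σ_j exp[d·w_eff·ln d·(1 − 1/w_j)]). -/
noncomputable def Istar {d : ℕ} (w : Fin d → ℝ) : ℝ :=
  Real.log (∑ j, Real.exp ((d : ℝ) * weff w * Real.log d * (1 - (w j)⁻¹)))

lemma aux_deriv (d : ℕ) (hd : 2 ≤ d) (w : Fin d → ℝ)
    (p v : Fin d → ℝ) (hq : ∀ i, 0 < Wbar w p i) (hv : ∑ i, v i = 0) :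
    HasDerivAt (fun t : ℝ => mutInfo w (fun i => p i + t * v i))
      (∑ i, w i * ((∑ j, Real.log (Wbar w p j)) / d + Real.log d - Real.log (Wbar w p i)) * v i)
      0 := by
  have hd0 : (d : ℝ) ≠ 0 := by positivity
  set c : ℝ := ∑ j, (1 - w j) * v j with hc
  have hW : ∀ (t : ℝ) i, Wbar w (fun i => p i + t * v i) i
      = Wbar w p i + t * (w i * v i + c / d) := by
    intro t i
    have : ∑ j, (1 - w j) * (p j + t * v j) = ∑ j, (1 - w j) * p j + t * c := by
      rw [hc, Finset.mul_sum, ← Finset.sum_add_distrib]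
      exact Finset.sum_congr rfl fun j _ => by ring
    simp only [Wbar, this]; ring
  have hP : ∀ t : ℝ, ∑ i, (p i + t * v i) * w i = ∑ i, p i * w i + t * ∑ i, v i * w i := by
    intro t
    rw [Finset.mul_sum, ← Finset.sum_add_distrib]
    exact Finset.sum_congr rfl fun j _ => by ring
  have hcw : c = - ∑ i, w i * v i := by
    rw [hc]; simp only [sub_mul, one_mul, Finset.sum_sub_distrib, hv]; ring
  have h1 : ∀ i, HasDerivAt (fun t : ℝ => Real.negMulLog (Wbar w p i + t * (w i * v i + c / d)))
      ((- Real.log (Wbar w p i) - 1) * (w i * v i + c / d)) 0 := by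
    intro i
    have ha : HasDerivAt (fun t : ℝ => Wbar w p i + t * (w i * v i + c / d))
        (w i * v i + c / d) 0 := by
      simpa using ((hasDerivAt_id (0:ℝ)).mul_const (w i * v i + c / d)).const_add (Wbar w p i)
    have hb : HasDerivAt Real.negMulLog (- Real.log (Wbar w p i) - 1)
        (Wbar w p i + 0 * (w i * v i + c / d)) := by
      rw [zero_mul, add_zero]
      exact Real.hasDerivAt_negMulLog (hq i).ne'
    exact hb.comp (0:ℝ) ha
  have h2 := HasDerivAt.fun_sum (u := Finset.univ) (fun i _ => h1 i)
  have h3 : HasDerivAt (fun t : ℝ => (∑ i, p i * w i + t * ∑ i, v i * w i) * Real.log d - Real.log d)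
      ((∑ i, v i * w i) * Real.log d) 0 := by
    have := ((((hasDerivAt_id (0:ℝ)).mul_const (∑ i, v i * w i)).const_add
      (∑ i, p i * w i)).mul_const (Real.log d)).sub_const (Real.log d)
    simpa using this
  have h4 := h2.add h3
  refine (h4.congr_deriv ?_).congr_of_eventuallyEq (Filter.Eventually.of_forall fun t => ?_)
  · have e1 : ∑ i, (- Real.log (Wbar w p i) - 1) * (w i * v i + c / d)
        = - ∑ i, Real.log (Wbar w p i) * (w i * v i) - (∑ i, Real.log (Wbar w p i)) * (c / d)
          - (∑ i, w i * v i) - c := by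
      have : c = ∑ i : Fin d, c / d := by simp; field_simp
      conv_rhs => rw [Finset.sum_mul]
      nth_rewrite 3 [this]
      rw [← Finset.sum_neg_distrib, ← Finset.sum_sub_distrib, ← Finset.sum_sub_distrib,
        ← Finset.sum_sub_distrib]
      exact Finset.sum_congr rfl fun j _ => by ring
    have e2 : ∑ i, w i * ((∑ j, Real.log (Wbar w p j)) / d + Real.log d - Real.log (Wbar w p i)) * v i
        = ((∑ j, Real.log (Wbar w p j)) / d + Real.log d) * (∑ i, w i * v i)
          - ∑ i, Real.log (Wbar w p i) * (w i * v i) := by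
      rw [Finset.mul_sum, ← Finset.sum_sub_distrib]
      exact Finset.sum_congr rfl fun j _ => by ring
    have e3 : ∑ i, v i * w i = ∑ i, w i * v i := Finset.sum_congr rfl fun j _ => by ring
    rw [e1, e2, e3, hcw]; ring
  · simp only [mutInfo, hW, hP, Pi.add_apply]; ring

theorem stmt2 (d : ℕ) (hd : 2 ≤ d) (w : Fin d → ℝ)
    (hw : ∀ i, 0 < w i ∧ w i ≤ 1)
    (pstar : Fin d → ℝ) (hpstar : inSimplex pstar)
    (hmax : ∀ p : Fin d → ℝ, inSimplex p → mutInfo w p ≤ mutInfo w pstar)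
    (hpos : ∀ i, 0 < pstar i) :
    sSup {y | ∃ p : Fin d → ℝ, inSimplex p ∧ y = mutInfo w p} = Istar w := by
  have hsup : sSup {y | ∃ p : Fin d → ℝ, inSimplex p ∧ y = mutInfo w p} = mutInfo w pstar := by
    apply IsGreatest.csSup_eq
    refine ⟨⟨pstar, hpstar, rfl⟩, ?_⟩
    rintro y ⟨p, hp, rfl⟩
    exact hmax p hp
  rw [hsup]
  have hd0 : (d : ℝ) ≠ 0 := by positivity
  have hne : Nonempty (Fin d) := ⟨⟨0, by omega⟩⟩
  have hs0 : 0 ≤ ∑ j, (1 - w j) * pstar j :=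
    Finset.sum_nonneg fun j _ => mul_nonneg (by linarith [(hw j).2]) (hpos j).le
  have hq : ∀ i, 0 < Wbar w pstar i := fun i =>
    add_pos_of_pos_of_nonneg (mul_pos (hw i).1 (hpos i)) (by positivity)
  set L := Real.log d with hL
  set A := (∑ j, Real.log (Wbar w pstar j)) / d with hA
  have hcrit : ∀ v : Fin d → ℝ, ∑ i, v i = 0 →
      ∑ i, w i * (A + L - Real.log (Wbar w pstar i)) * v i = 0 := by
    intro v hv
    have hder := aux_deriv d hd w pstar v hq hv
    refine IsLocalMax.hasDerivAt_eq_zero ?_ hder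
    have hev : ∀ᶠ t : ℝ in nhds 0, ∀ i, 0 < pstar i + t * v i := by
      rw [Filter.eventually_all]
      intro i
      have hcont : Continuous fun t : ℝ => pstar i + t * v i := by fun_prop
      exact hcont.continuousAt.eventually (lt_mem_nhds (by simpa using hpos i))
    filter_upwards [hev] with t ht
    have := hmax (fun i => pstar i + t * v i) ⟨fun i => (ht i).le, by
      rw [Finset.sum_add_distrib, ← Finset.mul_sum, hv, hpstar.2]; ring⟩
    simpa using this
  obtain ⟨μ, hμ⟩ : ∃ μ, ∀ i, w i * (A + L - Real.log (Wbar w pstar i)) = μ := by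
    set g : Fin d → ℝ := fun i => w i * (A + L - Real.log (Wbar w pstar i)) with hg
    refine ⟨(∑ i, g i) / d, ?_⟩
    have hz : ∑ i, (g i - (∑ i, g i) / d) = 0 := by
      rw [Finset.sum_sub_distrib]; simp; field_simp; simp
    have h := hcrit (fun i => g i - (∑ i, g i) / d) hz
    have h' : ∑ i, (g i - (∑ i, g i) / d) ^ 2 = 0 := by
      have : ∑ i, (g i - (∑ i, g i) / d) ^ 2 = ∑ i, g i * (g i - (∑ i, g i) / d)
          - (∑ i, g i) / d * ∑ i, (g i - (∑ i, g i) / d) := by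
        rw [Finset.mul_sum, ← Finset.sum_sub_distrib]
        exact Finset.sum_congr rfl fun j _ => by ring
      rw [this, hz]
      simpa using h
    intro i
    have := (Finset.sum_eq_zero_iff_of_nonneg (fun i _ => sq_nonneg _)).1 h' i (Finset.mem_univ i)
    have := pow_eq_zero_iff (two_ne_zero) |>.1 this
    linarith
  have hlog : ∀ i, Real.log (Wbar w pstar i) = A + L - μ * (w i)⁻¹ := by
    intro i
    rw [← hμ i]
    have := (hw i).1.ne'
    field_simp; ring
  set S := ∑ i, (w i)⁻¹ with hS
  have hSpos : 0 < S := Finset.sum_pos (fun i _ => inv_pos.2 (hw i).1) Finset.univ_nonempty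
  have hμS : μ * S = d * L := by
    have h1 : ∑ i, Real.log (Wbar w pstar i) = d * (A + L) - μ * S := by
      simp_rw [hlog]
      rw [Finset.sum_sub_distrib, ← Finset.mul_sum]; simp [hS]; ring
    have h2 : ∑ i, Real.log (Wbar w pstar i) = d * A := by rw [hA]; field_simp
    linarith
  have hμ' : (d : ℝ) * weff w * L = μ := by
    unfold weff
    rw [← hS]
    field_simp; linarith
  have hsw : ∑ j, (1 - w j) * pstar j = 1 - ∑ i, pstar i * w i := by
    have h1 := hpstar.2
    rw [eq_sub_iff_add_eq, ← Finset.sum_add_distrib]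
    refine Eq.trans ?_ h1
    exact Finset.sum_congr rfl fun j _ => by ring
  have hsumq : ∑ i, Wbar w pstar i = 1 := by
    unfold Wbar
    rw [Finset.sum_add_distrib, hsw]
    have : ∑ i, w i * pstar i = ∑ i, pstar i * w i := Finset.sum_congr rfl fun j _ => by ring
    rw [this]; simp; field_simp; ring
  have hqw : ∑ i, Wbar w pstar i * (w i)⁻¹ = 1 + (1 - ∑ i, pstar i * w i) / d * S := by
    unfold Wbar
    rw [hsw, hS, Finset.mul_sum]
    nth_rewrite 2 [← hpstar.2]
    rw [← Finset.sum_add_distrib]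
    refine Finset.sum_congr rfl fun j _ => ?_
    have := (hw j).1.ne'
    rw [add_mul]; congr 1; field_simp
  have hI : mutInfo w pstar = μ - (A + L) := by
    unfold mutInfo Real.negMulLog
    have : ∑ i, -Wbar w pstar i * Real.log (Wbar w pstar i)
        = -(A + L) * ∑ i, Wbar w pstar i + μ * ∑ i, Wbar w pstar i * (w i)⁻¹ := by
      simp_rw [hlog]
      rw [Finset.mul_sum, Finset.mul_sum, ← Finset.sum_add_distrib]
      exact Finset.sum_congr rfl fun j _ => by ring
    rw [this, hsumq, hqw, ← hL]
    have : μ * (1 + (1 - ∑ i, pstar i * w i) / d * S)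
        = μ + (1 - ∑ i, pstar i * w i) * L := by
      have : μ * (1 + (1 - ∑ i, pstar i * w i) / d * S)
        = μ + (1 - ∑ i, pstar i * w i) / d * (μ * S) := by ring
      rw [this, hμS]; field_simp
    rw [this]; ring
  unfold Istar
  rw [← hL, hμ', hI]
  have : ∀ j, Real.exp (μ * (1 - (w j)⁻¹)) = Real.exp (μ - (A + L)) * Wbar w pstar j := by
    intro j
    rw [← Real.exp_log (hq j), hlog, ← Real.exp_add]
    congr 1; ring
  simp_rw [this]
  rw [← Finset.mul_sum, hsumq, mul_one, Real.log_exp]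
end

section
/- Let d ≥ 2 be an integer and ω ∈ [0,1]. Then for every w ∈ (0,1]^d with all entries strictly positive satisfying (1/d)·Σ_{i=1}^d w_i ≤ ω, one has ℐ*(w) ≤ ln(d − 1 + d^{−(1−ω)d}). -/
theorem weierstrass_aux {ι : Type*} (s : Finset ι) (a : ι → ℝ)
    (h : ∀ i, 0 ≤ a i ∧ a i ≤ 1) : 1 - ∏ i ∈ s, a i ≤ ∑ i ∈ s, (1 - a i) := by
  classical
  induction s using Finset.induction_on with
  | empty => simp
  | insert i s hi ih =>
    rw [Finset.prod_insert hi, Finset.sum_insert hi]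
    have h1 : ∏ i ∈ s, a i ≤ 1 := Finset.prod_le_one (fun j _ => (h j).1) (fun j _ => (h j).2)
    nlinarith [(h i).1, (h i).2]

theorem stmt3 (d : ℕ) (hd : 2 ≤ d) (ω : ℝ) (hω : ω ∈ Set.Icc (0 : ℝ) 1)
    (w : Fin d → ℝ) (hw : ∀ i, 0 < w i ∧ w i ≤ 1)
    (hsum : (1 / (d : ℝ)) * ∑ i, w i ≤ ω) :
    Istar w ≤ Real.log ((d : ℝ) - 1 + (d : ℝ) ^ (-(1 - ω) * (d : ℝ))) := by
  have hd' : (2 : ℝ) ≤ d := by exact_mod_cast hd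
  have hd0 : (0 : ℝ) < d := by linarith
  haveI : Nonempty (Fin d) := ⟨⟨0, by omega⟩⟩
  have hL : 0 ≤ Real.log d := Real.log_nonneg (by linarith)
  have hS : 0 < ∑ i, (w i)⁻¹ :=
    Finset.sum_pos (fun i _ => inv_pos.2 (hw i).1) Finset.univ_nonempty
  have hq : 0 < weff w := inv_pos.2 hS
  have hqS : weff w * ∑ i, (w i)⁻¹ = 1 := inv_mul_cancel₀ hS.ne'
  have hsw : ∑ i, w i ≤ ω * d := by
    rw [one_div, inv_mul_le_iff₀ hd0] at hsum
    linarith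
  have hcs : (d : ℝ) ^ 2 ≤ (∑ i, w i) * ∑ i, (w i)⁻¹ := by
    have := Finset.sum_sq_le_sum_mul_sum_of_sq_eq_mul (Finset.univ : Finset (Fin d))
      (r := fun _ => (1 : ℝ)) (f := w) (g := fun i => (w i)⁻¹)
      (fun i _ => (hw i).1.le) (fun i _ => (inv_pos.2 (hw i).1).le)
      (fun i _ => by have := (hw i).1.ne'; field_simp; try norm_num)
    simpa using this
  have hh : (d : ℝ) * weff w ≤ ω := by
    have h1 : (d : ℝ) ^ 2 * weff w ≤ ∑ i, w i := by
      calc (d : ℝ) ^ 2 * weff w ≤ ((∑ i, w i) * ∑ i, (w i)⁻¹) * weff w := by gcongr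
        _ = (∑ i, w i) * (weff w * ∑ i, (w i)⁻¹) := by ring
        _ = _ := by rw [hqS, mul_one]
    have : d * (d * weff w) ≤ d * ω := by nlinarith
    exact le_of_mul_le_mul_left this hd0
  unfold Istar
  apply Real.log_le_log
  · exact Finset.sum_pos (fun i _ => Real.exp_pos _) Finset.univ_nonempty
  have key := weierstrass_aux (Finset.univ : Finset (Fin d))
    (fun j => Real.exp ((d : ℝ) * weff w * Real.log d * (1 - (w j)⁻¹)))
    (fun j => ⟨(Real.exp_pos _).le, by
      rw [Real.exp_le_one_iff]
      have h1 : 1 ≤ (w j)⁻¹ := (one_le_inv₀ (hw j).1).2 (hw j).2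
      exact mul_nonpos_of_nonneg_of_nonpos (by positivity) (by linarith)⟩)
  rw [← Real.exp_sum, ← Finset.mul_sum, Finset.sum_sub_distrib, Finset.sum_sub_distrib] at key
  simp only [Finset.sum_const, Finset.card_univ, Fintype.card_fin, nsmul_eq_mul, mul_one] at key
  have he : Real.exp ((d : ℝ) * weff w * Real.log d * (d - ∑ i, (w i)⁻¹))
      ≤ (d : ℝ) ^ (-(1 - ω) * (d : ℝ)) := by
    rw [Real.rpow_def_of_pos hd0]
    apply Real.exp_le_exp.2
    have : (d : ℝ) * weff w * Real.log d * (d - ∑ i, (w i)⁻¹)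
        = Real.log d * d * (d * weff w - weff w * ∑ i, (w i)⁻¹) := by ring
    rw [this, hqS]
    have h2 : 0 ≤ Real.log d * d := by positivity
    nlinarith [mul_le_mul_of_nonneg_left hh h2]
  linarith
end

section
/- Let d ≥ 2 be an integer and ω ∈ [0,1]. Then for every winning vector w ∈ [0,1]^d satisfying (1/d)·Σ_{i=1}^d w_i ≤ ω and every π ∈ Δ_d, one has ℐ_w(π) ≤ ln(d − 1 + d^{−(1−ω)d}). -/
lemma aux_gibbs (q c : ℝ) (hq : 0 ≤ q) :
    Real.negMulLog q ≤ q * c + Real.exp (-c) - q := by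
  rcases hq.eq_or_lt with h | h
  · subst h
    simp [Real.negMulLog, Real.exp_nonneg]
  · have h1 := Real.log_le_sub_one_of_pos (div_pos (Real.exp_pos (-c)) h)
    rw [Real.log_div (Real.exp_pos _).ne' h.ne', Real.log_exp] at h1
    have h2 := mul_le_mul_of_nonneg_left h1 hq
    have h3 : q * (Real.exp (-c) / q - 1) = Real.exp (-c) - q := by
      field_simp
    rw [h3] at h2
    unfold Real.negMulLog
    linarith

lemma aux_prod {ι : Type*} (s : Finset ι) (b : ι → ℝ) (hb : ∀ i, 0 ≤ b i ∧ b i ≤ 1) :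
    ∑ i ∈ s, b i ≤ (s.card : ℝ) - 1 + ∏ i ∈ s, b i ∧ ∏ i ∈ s, b i ≤ 1 := by
  classical
  induction s using Finset.induction_on with
  | empty => simp
  | insert a s ha ih =>
    rw [Finset.sum_insert ha, Finset.prod_insert ha, Finset.card_insert_of_notMem ha]
    push_cast
    obtain ⟨h1, h2⟩ := ih
    obtain ⟨h3, h4⟩ := hb a
    have h5 : 0 ≤ ∏ i ∈ s, b i := Finset.prod_nonneg fun i _ => (hb i).1
    constructor
    · nlinarith [mul_nonneg (sub_nonneg.2 h4) (sub_nonneg.2 h2)]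
    · nlinarith

lemma aux_exists (d : ℕ) (hd : 2 ≤ d) (w : Fin d → ℝ) (hw : ∀ i, w i ∈ Set.Icc (0 : ℝ) 1) :
    ∃ x : Fin d → ℝ, (∀ i, 0 ≤ x i) ∧ ∑ i, (1 - w i) ≤ ∑ i, x i ∧
      ∀ i, w i * x i + (1 - w i) * ((∑ j, x j) / d - 1) ≤ 0 := by
  have hd0 : (0 : ℝ) < d := by exact_mod_cast (by omega : 0 < d)
  by_cases h : ∃ k, w k = 0
  · obtain ⟨k, hk⟩ := h
    refine ⟨fun i => if i = k then (d : ℝ) else 0, ?_, ?_, ?_⟩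
    · intro i; dsimp only; split_ifs <;> linarith
    · simp only [Finset.sum_ite_eq', Finset.mem_univ, if_true]
      calc ∑ i, (1 - w i) ≤ ∑ i : Fin d, (1 : ℝ) :=
            Finset.sum_le_sum fun i _ => by linarith [(hw i).1]
        _ = d := by simp
    · intro i
      simp only [Finset.sum_ite_eq', Finset.mem_univ, if_true]
      rw [div_self hd0.ne']
      split_ifs with hi
      · subst hi; simp [hk]
      · simp
  · push Not at h
    have hw0 : ∀ i, 0 < w i := fun i => lt_of_le_of_ne (hw i).1 (Ne.symm (h i))
    set a : Fin d → ℝ := fun i => (1 - w i) / w i with ha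
    have ha0 : ∀ i, 0 ≤ a i := fun i => div_nonneg (by linarith [(hw i).2]) (hw0 i).le
    have haw : ∀ i, w i * a i = 1 - w i := fun i => by
      simp only [ha]; field_simp [(hw0 i).ne']
    set m : ℝ := (∑ i, a i) / d with hm
    have hm0 : 0 ≤ m := div_nonneg (Finset.sum_nonneg fun i _ => ha0 i) hd0.le
    have hsa : ∑ i, a i = d * m := by rw [hm]; field_simp
    have hsx : ∑ i, a i / (1 + m) = d * m / (1 + m) := by rw [← Finset.sum_div, hsa]
    refine ⟨fun i => a i / (1 + m), fun i => div_nonneg (ha0 i) (by linarith), ?_, ?_⟩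
    · have key : ∀ i, 1 - w i ≤ m / (1 + m) + (a i - m) / (1 + m) ^ 2 := by
        intro i
        have h1 : w i = 1 / (1 + a i) := by
          have := haw i
          rw [eq_div_iff (by linarith [ha0 i])]
          linarith
        rw [h1]
        have h2 : 0 < 1 + a i := by linarith [ha0 i]
        have h3 : 0 < 1 + m := by linarith
        rw [← sub_nonneg]
        have : m / (1 + m) + (a i - m) / (1 + m) ^ 2 - (1 - 1 / (1 + a i))
            = (a i - m) ^ 2 / ((1 + m) ^ 2 * (1 + a i)) := by
          field_simp
          ring
        rw [this]
        positivity
      refine (Finset.sum_le_sum fun i _ => key i).trans ?_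
      rw [Finset.sum_add_distrib, ← Finset.sum_div Finset.univ (fun i => a i - m), Finset.sum_sub_distrib, hsa, hsx]
      simp
      exact le_of_eq (by ring)
    · intro i
      simp only [hsx]
      have h3 : 0 < 1 + m := by linarith
      rw [← mul_div_assoc, haw]
      apply le_of_eq
      field_simp
      ring

theorem stmt4 (d : ℕ) (hd : 2 ≤ d) (ω : ℝ) (hω : ω ∈ Set.Icc (0 : ℝ) 1)
    (w : Fin d → ℝ) (hw : ∀ i, w i ∈ Set.Icc (0 : ℝ) 1)
    (hsum : (1 / (d : ℝ)) * ∑ i, w i ≤ ω)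
    (p : Fin d → ℝ) (hp : inSimplex p) :
    mutInfo w p ≤ Real.log ((d : ℝ) - 1 + (d : ℝ) ^ (-(1 - ω) * (d : ℝ))) := by
  obtain ⟨x, hx0, hxS, hx⟩ := aux_exists d hd w hw
  obtain ⟨hp0, hp1⟩ := hp
  have hd0 : (0 : ℝ) < d := by exact_mod_cast (by omega : 0 < d)
  have hd1 : (1 : ℝ) ≤ d := by exact_mod_cast (by omega : 1 ≤ d)
  have hne : (Finset.univ : Finset (Fin d)).Nonempty := ⟨⟨0, by omega⟩, Finset.mem_univ _⟩
  set L := Real.log d with hL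
  have hL0 : 0 ≤ L := Real.log_nonneg hd1
  set Z := ∑ i, Real.exp (-(L * x i)) with hZ
  have hZ0 : 0 < Z := Finset.sum_pos (fun i _ => Real.exp_pos _) hne
  have hZle : Z ≤ (d : ℝ) - 1 + (d : ℝ) ^ (-(1 - ω) * (d : ℝ)) := by
    have h1 := (aux_prod Finset.univ (fun i => Real.exp (-(L * x i))) (fun i =>
      ⟨Real.exp_nonneg _, Real.exp_le_one_iff.2 (by
        have := mul_nonneg hL0 (hx0 i); linarith)⟩)).1
    rw [← Real.exp_sum] at h1
    simp only [Finset.card_univ, Fintype.card_fin] at h1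
    refine h1.trans ?_
    rw [Real.rpow_def_of_pos hd0]
    gcongr
    rw [Finset.sum_neg_distrib, ← Finset.mul_sum]
    have h2 : (1 - ω) * d ≤ ∑ i, x i := by
      refine le_trans ?_ hxS
      rw [Finset.sum_sub_distrib]
      simp
      rw [one_div, inv_mul_le_iff₀ hd0] at hsum
      linarith
    have := mul_le_mul_of_nonneg_left h2 hL0
    linarith
  refine le_trans ?_ (Real.log_le_log hZ0 hZle)
  set T := ∑ j, (1 - w j) * p j with hT
  have hT0 : 0 ≤ T := Finset.sum_nonneg fun j _ =>
    mul_nonneg (by linarith [(hw j).2]) (hp0 j)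
  have hwp : ∑ i, p i * w i = 1 - T := by
    have e : ∑ i, p i * w i + T = ∑ i, p i := by
      rw [hT, ← Finset.sum_add_distrib]
      exact Finset.sum_congr rfl fun i _ => by ring
    linarith
  have hq0 : ∀ i, 0 ≤ Wbar w p i := fun i =>
    add_nonneg (mul_nonneg (hw i).1 (hp0 i)) (div_nonneg hT0 hd0.le)
  have hq1 : ∑ i, Wbar w p i = 1 := by
    simp only [Wbar]
    rw [Finset.sum_add_distrib, ← hT]
    have : ∑ i, w i * p i = 1 - T := by
      rw [← hwp]; exact Finset.sum_congr rfl fun i _ => by ring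
    rw [this]
    simp
    field_simp
    ring
  have hH : ∑ i, Real.negMulLog (Wbar w p i) ≤
      Real.log Z + L * ∑ i, Wbar w p i * x i := by
    have h1 := Finset.sum_le_sum fun i (_ : i ∈ Finset.univ) =>
      aux_gibbs (Wbar w p i) (Real.log Z + L * x i) (hq0 i)
    refine h1.trans (le_of_eq ?_)
    have h2 : ∀ i, Real.exp (-(Real.log Z + L * x i)) = Real.exp (-(L * x i)) / Z := by
      intro i
      rw [neg_add, Real.exp_add, Real.exp_neg (Real.log Z), Real.exp_log hZ0]
      field_simp
    simp only [h2]
    rw [Finset.sum_sub_distrib, Finset.sum_add_distrib, hq1, ← Finset.sum_div, ← hZ,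
      div_self hZ0.ne']
    have h3 : ∀ i, Wbar w p i * (Real.log Z + L * x i)
        = Wbar w p i * Real.log Z + L * (Wbar w p i * x i) := fun i => by ring
    simp only [h3]
    rw [Finset.sum_add_distrib, ← Finset.sum_mul, hq1, ← Finset.mul_sum]
    ring
  have hX : ∑ i, Wbar w p i * x i - T ≤ 0 := by
    have h1 : ∑ i, Wbar w p i * x i - T
        = ∑ i, p i * (w i * x i + (1 - w i) * ((∑ j, x j) / d - 1)) := by
      have e1 : ∑ i, Wbar w p i * x i = ∑ i, w i * p i * x i + T / d * ∑ j, x j := by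
        rw [Finset.mul_sum, ← Finset.sum_add_distrib]
        exact Finset.sum_congr rfl fun i _ => by simp only [Wbar]; rw [← hT]; ring
      have e2 : ∑ i, p i * (w i * x i + (1 - w i) * ((∑ j, x j) / d - 1))
          = ∑ i, w i * p i * x i + T * ((∑ j, x j) / d - 1) := by
        rw [hT, Finset.sum_mul, ← Finset.sum_add_distrib]
        exact Finset.sum_congr rfl fun i _ => by ring
      rw [e1, e2]; ring
    rw [h1]
    exact Finset.sum_nonpos fun i _ => mul_nonpos_of_nonneg_of_nonpos (hp0 i) (hx i)
  unfold mutInfo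
  rw [hwp, ← hL]
  nlinarith [mul_nonneg hL0 (neg_nonneg.2 hX)]
end

section
/- Let N be a two-sender multiple access channel with input alphabet sizes d₁, d₂ ≥ 2 and output alphabet size d_o ≥ 2. Then for every p ∈ Δ_{d₁} and all q, q' ∈ Δ_{d₂}, |I(p,q) − I(p,q')| ≤ β_I(‖q − q'‖₁); consequently, defining I*(q) = sup_{p ∈ Δ_{d₁}} I(p,q), one also has |I*(q) − I*(q')| ≤ β_I(‖q − q'‖₁) for all q, q' ∈ Δ_{d₂}. -/
/-- The modified binary entropy h̄ (in nats), with 0·ln 0 := 0. -/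
noncomputable def hbar (x : ℝ) : ℝ :=
  if x ≤ 1 / 2 then Real.negMulLog x + Real.negMulLog (1 - x) else Real.log 2

/-- The mutual information I(p,q) = H(A_q p) − ⟨b_q, p⟩ for a two-sender MAC N, in nats. -/
noncomputable def mutualInfoMAC {d1 d2 dO : ℕ}
    (N : Fin dO → Fin d1 → Fin d2 → ℝ) (p : Fin d1 → ℝ) (q : Fin d2 → ℝ) : ℝ :=
  (∑ z, Real.negMulLog (∑ b1, (∑ b2, N z b1 b2 * q b2) * p b1)) -
    ∑ b1, (∑ b2, q b2 * ∑ z, Real.negMulLog (N z b1 b2)) * p b1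

/-- H^max_N: the maximum output entropy over input letter pairs. -/
noncomputable def HmaxN {d1 d2 dO : ℕ} (N : Fin dO → Fin d1 → Fin d2 → ℝ) : ℝ :=
  ⨆ b1 : Fin d1, ⨆ b2 : Fin d2, ∑ z, Real.negMulLog (N z b1 b2)

/-- The continuity modulus β_I(x) = ((1/2)·ln(d_o − 1) + H^max_N)·x + h̄(x/2). -/
noncomputable def betaI {d1 d2 dO : ℕ} (N : Fin dO → Fin d1 → Fin d2 → ℝ) (x : ℝ) : ℝ :=
  ((1 / 2) * Real.log ((dO : ℝ) - 1) + HmaxN N) * x + hbar (x / 2)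

lemma core_ineq {d : ℕ} (r s : Fin d → ℝ) (P Q : Fin d → Fin d → ℝ)
    (hP : ∀ x y, 0 ≤ P x y) (hr : ∀ x, ∑ y, P x y = r x) (hs : ∀ y, ∑ x, P x y = s y)
    (hs1 : ∑ y, s y = 1)
    (hQ : ∀ x y, 0 < Q x y) (hQ1 : ∀ y, ∑ x, Q x y = 1) :
    ∑ x, Real.negMulLog (r x) - ∑ y, Real.negMulLog (s y) ≤
      ∑ x, ∑ y, P x y * (-Real.log (Q x y)) := by
  have hrn : ∀ x y, P x y ≤ r x := fun x y => by
    rw [← hr x]; exact Finset.single_le_sum (f := fun y => P x y) (fun i _ => hP x i) (Finset.mem_univ y)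
  have hsn : ∀ x y, P x y ≤ s y := fun x y => by
    rw [← hs y]; exact Finset.single_le_sum (f := fun x => P x y) (fun i _ => hP i y) (Finset.mem_univ x)
  have pt : ∀ x y, P x y * (Real.log (s y) + Real.log (Q x y) - Real.log (r x)) ≤
      s y * Q x y - P x y := by
    intro x y
    rcases (hP x y).eq_or_lt with h | h
    · rw [← h]
      have : 0 ≤ s y := le_trans (hP x y) (hsn x y)
      have := mul_nonneg this (hQ x y).le
      linarith
    · have hrp := h.trans_le (hrn x y)
      have hsp := h.trans_le (hsn x y)
      have hq := hQ x y
      have e : Real.log (s y) + Real.log (Q x y) - Real.log (r x)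
          = Real.log (s y * Q x y / r x) := by
        rw [Real.log_div (by positivity) hrp.ne', Real.log_mul hsp.ne' hq.ne']
      rw [e]
      have h2 := Real.log_le_sub_one_of_pos (x := s y * Q x y / r x) (by positivity)
      have h3 : P x y * (s y * Q x y / r x) ≤ s y * Q x y := by
        rw [mul_div_assoc', div_le_iff₀ hrp, mul_comm]
        exact mul_le_mul_of_nonneg_left (hrn x y) (by positivity)
      nlinarith [mul_le_mul_of_nonneg_left h2 h.le]
  have hsum := Finset.sum_le_sum (fun x (_ : x ∈ Finset.univ) =>
    Finset.sum_le_sum (fun y (_ : y ∈ Finset.univ) => pt x y))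
  have a1 : ∑ x, ∑ y, P x y * Real.log (s y) = - ∑ y, Real.negMulLog (s y) := by
    rw [Finset.sum_comm, ← Finset.sum_neg_distrib]
    refine Finset.sum_congr rfl fun y _ => ?_
    rw [← Finset.sum_mul, hs, Real.negMulLog]; ring
  have a2 : ∑ x, ∑ y, P x y * Real.log (r x) = - ∑ x, Real.negMulLog (r x) := by
    rw [← Finset.sum_neg_distrib]
    refine Finset.sum_congr rfl fun y _ => ?_
    rw [← Finset.sum_mul, hr, Real.negMulLog]; ring
  have a3 : ∑ x, ∑ y, s y * Q x y = 1 := by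
    rw [Finset.sum_comm]; simp [← Finset.mul_sum, hQ1, hs1]
  have a4 : ∑ x, ∑ y, P x y = 1 := by
    rw [Finset.sum_comm]; simp [hs, hs1]
  simp only [mul_sub, mul_add, Finset.sum_sub_distrib, Finset.sum_add_distrib] at hsum
  simp only [mul_neg, Finset.sum_neg_distrib]
  linarith

lemma fannes {d : ℕ} (hd : 2 ≤ d) (r s : Fin d → ℝ) (hr : inSimplex r) (hs : inSimplex s)
    (T : ℝ) (hT : 0 < T) (hle : ∑ x, (r x - min (r x) (s x)) ≤ T) :
    ∑ x, Real.negMulLog (r x) - ∑ y, Real.negMulLog (s y) ≤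
      T * Real.log ((d : ℝ) - 1) + hbar T := by
  have hd' : (1 : ℝ) ≤ (d : ℝ) - 1 := by
    have : (2 : ℝ) ≤ d := by exact_mod_cast hd
    linarith
  have hL := Real.log_nonneg hd'
  set U : ℝ := min T (1 / 2) with hU
  have hU0 : 0 < U := lt_min hT (by norm_num)
  have hU2 : U ≤ 1 / 2 := min_le_right _ _
  set u : Fin d → ℝ := fun x => r x - min (r x) (s x) with hu
  set v : Fin d → ℝ := fun x => s x - min (r x) (s x) with hv
  set t : ℝ := ∑ x, u x with ht
  have hu0 : ∀ x, 0 ≤ u x := fun x => sub_nonneg.2 (min_le_left _ _)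
  have hv0 : ∀ x, 0 ≤ v x := fun x => sub_nonneg.2 (min_le_right _ _)
  have ht0 : 0 ≤ t := Finset.sum_nonneg fun x _ => hu0 x
  have hm : ∑ x, min (r x) (s x) = 1 - t := by
    simp only [ht, hu, Finset.sum_sub_distrib, hr.2]; ring
  have hvt : ∑ x, v x = t := by
    simp only [hv, Finset.sum_sub_distrib, hs.2, hm]; ring
  have hm0 : ∀ x, 0 ≤ min (r x) (s x) := fun x => le_min (hr.1 x) (hs.1 x)
  have hut : ∀ x, u x * t / t = u x := by
    intro x
    by_cases h : t = 0
    · have : u x = 0 := (Finset.sum_eq_zero_iff_of_nonneg (fun x _ => hu0 x)).1 h x (Finset.mem_univ x)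
      simp [this]
    · field_simp
  have hvt' : ∀ x, t * v x / t = v x := by
    intro x
    by_cases h : t = 0
    · have : v x = 0 := (Finset.sum_eq_zero_iff_of_nonneg (fun x _ => hv0 x)).1 (hvt.trans h) x (Finset.mem_univ x)
      simp [this]
    · field_simp
  have key := core_ineq r s (fun x y => (if x = y then min (r x) (s x) else 0) + u x * v y / t)
    (fun x y => if x = y then 1 - U else U / ((d : ℝ) - 1))
    (by
      intro x y
      have := div_nonneg (mul_nonneg (hu0 x) (hv0 y)) ht0
      have := hm0 x
      split_ifs <;> linarith)
    (by
      intro x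
      simp only [Finset.sum_add_distrib, Finset.sum_ite_eq, Finset.mem_univ, if_true]
      rw [← Finset.sum_div, ← Finset.mul_sum, hvt, hut]; simp [hu])
    (by
      intro y
      simp only [Finset.sum_add_distrib, Finset.sum_ite_eq', Finset.mem_univ, if_true]
      rw [← Finset.sum_div, ← Finset.sum_mul, ← ht, hvt']; simp [hv])
    hs.2
    (by
      intro x y
      split_ifs
      · linarith
      · exact div_pos hU0 (by linarith))
    (by
      intro y
      have : ∀ x, (if x = y then 1 - U else U / ((d : ℝ) - 1)) =
          (if x = y then 1 - U - U / ((d : ℝ) - 1) else 0) + U / ((d : ℝ) - 1) := by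
        intro x; split_ifs <;> ring
      simp only [this, Finset.sum_add_distrib, Finset.sum_ite_eq', Finset.mem_univ, if_true,
        Finset.sum_const, Finset.card_univ, Fintype.card_fin, nsmul_eq_mul]
      have : (d : ℝ) - 1 ≠ 0 := by linarith
      field_simp
      ring)
  refine key.trans ?_
  set c : ℝ := -Real.log U + Real.log ((d : ℝ) - 1) with hc
  have hlogU : -Real.log (1 - U) ≤ -Real.log U := by
    have := Real.log_le_log hU0 (by linarith : U ≤ 1 - U)
    linarith
  have bd : ∀ x y : Fin d, ((if x = y then min (r x) (s x) else 0) + u x * v y / t) *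
      -Real.log (if x = y then 1 - U else U / ((d : ℝ) - 1)) ≤
      (if x = y then min (r x) (s x) * (-Real.log (1 - U)) else 0) + u x * v y / t * c := by
    intro x y
    have h := div_nonneg (mul_nonneg (hu0 x) (hv0 y)) ht0
    split_ifs with hxy
    · rw [add_mul]
      have := mul_le_mul_of_nonneg_left (by linarith : -Real.log (1 - U) ≤ c) h
      linarith
    · rw [Real.log_div hU0.ne' (by linarith)]
      apply le_of_eq
      rw [hc]; ring
  refine (Finset.sum_le_sum fun x _ => Finset.sum_le_sum fun y _ => bd x y).trans ?_
  have tot : ∑ x, ∑ y, ((if x = y then min (r x) (s x) * (-Real.log (1 - U)) else 0) +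
      u x * v y / t * c) = (1 - t) * (-Real.log (1 - U)) + t * c := by
    simp only [Finset.sum_add_distrib, Finset.sum_ite_eq, Finset.mem_univ, if_true]
    rw [← Finset.sum_mul, hm]
    congr 1
    simp only [← Finset.sum_mul, ← Finset.sum_div, ← Finset.mul_sum, hvt, hut]
    rfl
  rw [tot]
  have hTL := mul_le_mul_of_nonneg_right hle hL
  unfold hbar
  split_ifs with h
  · have hUT : U = T := min_eq_left h
    rw [hc]
    rw [hUT] at hlogU ⊢
    simp only [Real.negMulLog]
    nlinarith [mul_nonneg (sub_nonneg.2 hle) (sub_nonneg.2 hlogU)]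
  · have hUT : U = 1 / 2 := min_eq_right (by linarith)
    rw [hc, hUT]
    have : Real.log (1 / 2) = - Real.log 2 := by simp
    have h1 : (1 : ℝ) - 1 / 2 = 1 / 2 := by norm_num
    rw [h1, this]
    nlinarith

lemma ent_nonneg {d1 d2 dO : ℕ} (N : Fin dO → Fin d1 → Fin d2 → ℝ)
    (hNnn : ∀ z b1 b2, 0 ≤ N z b1 b2)
    (hNsum : ∀ b1 b2, ∑ z, N z b1 b2 = 1) (b1 b2) :
    0 ≤ ∑ z, Real.negMulLog (N z b1 b2) :=
  Finset.sum_nonneg fun z _ => Real.negMulLog_nonneg (hNnn z b1 b2) (by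
    rw [← hNsum b1 b2]
    exact Finset.single_le_sum (f := fun z => N z b1 b2) (fun i _ => hNnn i b1 b2) (Finset.mem_univ z))

lemma ent_le {d1 d2 dO : ℕ} (N : Fin dO → Fin d1 → Fin d2 → ℝ) (b1 b2) :
    ∑ z, Real.negMulLog (N z b1 b2) ≤ HmaxN N := by
  unfold HmaxN
  refine le_trans ?_ (le_ciSup (f := fun b1 => ⨆ b2 : Fin d2, ∑ z, Real.negMulLog (N z b1 b2))
    (Set.finite_range _).bddAbove b1)
  exact le_ciSup (f := fun b2 => ∑ z, Real.negMulLog (N z b1 b2)) (Set.finite_range _).bddAbove b2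

lemma out_simplex {d1 d2 dO : ℕ} (N : Fin dO → Fin d1 → Fin d2 → ℝ)
    (hNnn : ∀ z b1 b2, 0 ≤ N z b1 b2)
    (hNsum : ∀ b1 b2, ∑ z, N z b1 b2 = 1) (p : Fin d1 → ℝ) (q : Fin d2 → ℝ)
    (hp : inSimplex p) (hq : inSimplex q) :
    inSimplex (fun z => ∑ b1, (∑ b2, N z b1 b2 * q b2) * p b1) := by
  constructor
  · intro z
    exact Finset.sum_nonneg fun b1 _ => mul_nonneg
      (Finset.sum_nonneg fun b2 _ => mul_nonneg (hNnn _ _ _) (hq.1 _)) (hp.1 _)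
  · rw [Finset.sum_comm]
    have : ∀ b1, ∑ z, (∑ b2, N z b1 b2 * q b2) * p b1 = p b1 := by
      intro b1
      rw [← Finset.sum_mul, Finset.sum_comm]
      simp [← Finset.sum_mul, hNsum, hq.2]
    simp [this, hp.2]

lemma one_side {d1 d2 dO : ℕ} (hO : 2 ≤ dO)
    (N : Fin dO → Fin d1 → Fin d2 → ℝ)
    (hNnn : ∀ z b1 b2, 0 ≤ N z b1 b2)
    (hNsum : ∀ b1 b2, ∑ z, N z b1 b2 = 1)
    (p : Fin d1 → ℝ) (hp : inSimplex p) (q q' : Fin d2 → ℝ) (hq : inSimplex q)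
    (hq' : inSimplex q') :
    mutualInfoMAC N p q - mutualInfoMAC N p q' ≤ betaI N (∑ i, |q i - q' i|) := by
  have hX0 : 0 ≤ ∑ i, |q i - q' i| := Finset.sum_nonneg fun i _ => abs_nonneg _
  rcases hX0.eq_or_lt with h0 | hpos
  · have hqq : q = q' := by
      funext i
      have := (Finset.sum_eq_zero_iff_of_nonneg (fun i _ => abs_nonneg (q i - q' i))).1 h0.symm i
        (Finset.mem_univ i)
      exact sub_eq_zero.1 (abs_eq_zero.1 this)
    subst hqq
    simp [betaI, hbar]
  set X := ∑ i, |q i - q' i| with hX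
  have hr := out_simplex N hNnn hNsum p q hp hq
  have hs := out_simplex N hNnn hNsum p q' hp hq'
  set r := fun z => ∑ b1, (∑ b2, N z b1 b2 * q b2) * p b1 with hrdef
  set s := fun z => ∑ b1, (∑ b2, N z b1 b2 * q' b2) * p b1 with hsdef
  have l1 : ∑ z, |r z - s z| ≤ X := by
    have : ∀ z, |r z - s z| ≤ ∑ b1, (∑ b2, N z b1 b2 * |q b2 - q' b2|) * p b1 := by
      intro z
      have : r z - s z = ∑ b1, (∑ b2, N z b1 b2 * (q b2 - q' b2)) * p b1 := by
        simp only [hrdef, hsdef, mul_sub, Finset.sum_sub_distrib, sub_mul]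
      rw [this]
      refine (Finset.abs_sum_le_sum_abs _ _).trans (Finset.sum_le_sum fun b1 _ => ?_)
      rw [abs_mul, abs_of_nonneg (hp.1 b1)]
      refine mul_le_mul_of_nonneg_right ?_ (hp.1 b1)
      refine (Finset.abs_sum_le_sum_abs _ _).trans (Finset.sum_le_sum fun b2 _ => ?_)
      rw [abs_mul, abs_of_nonneg (hNnn _ _ _)]
    refine (Finset.sum_le_sum fun z _ => this z).trans (le_of_eq ?_)
    rw [Finset.sum_comm]
    have : ∀ b1, ∑ z, (∑ b2, N z b1 b2 * |q b2 - q' b2|) * p b1 = X * p b1 := by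
      intro b1
      rw [← Finset.sum_mul, Finset.sum_comm]
      simp [← Finset.sum_mul, hNsum, hX]
    simp [this, ← Finset.mul_sum, hp.2]
  have tv : ∑ z, (r z - min (r z) (s z)) ≤ X / 2 := by
    have : ∀ z, r z - min (r z) (s z) = (|r z - s z| + r z - s z) / 2 := by
      intro z
      rcases le_total (r z) (s z) with h | h
      · rw [min_eq_left h, abs_of_nonpos (by linarith)]; ring
      · rw [min_eq_right h, abs_of_nonneg (by linarith)]; ring
    simp only [this, ← Finset.sum_div, Finset.sum_sub_distrib, Finset.sum_add_distrib]
    rw [hr.2, hs.2]; linarith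
  have f := fannes hO r s hr hs (X / 2) (by linarith) tv
  have lin : ∑ b1, (∑ b2, q' b2 * ∑ z, Real.negMulLog (N z b1 b2)) * p b1 -
      ∑ b1, (∑ b2, q b2 * ∑ z, Real.negMulLog (N z b1 b2)) * p b1 ≤ HmaxN N * X := by
    have : ∀ b1, (∑ b2, q' b2 * ∑ z, Real.negMulLog (N z b1 b2)) * p b1 -
        (∑ b2, q b2 * ∑ z, Real.negMulLog (N z b1 b2)) * p b1 ≤ (HmaxN N * X) * p b1 := by
      intro b1
      rw [← sub_mul, ← Finset.sum_sub_distrib]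
      refine mul_le_mul_of_nonneg_right ?_ (hp.1 b1)
      rw [hX, Finset.mul_sum]
      refine Finset.sum_le_sum fun b2 _ => ?_
      have e0 := ent_nonneg N hNnn hNsum b1 b2
      have e1 := ent_le N b1 b2
      have a1 := neg_abs_le (q b2 - q' b2)
      have a2 := abs_nonneg (q b2 - q' b2)
      nlinarith [mul_le_mul_of_nonneg_right e1 a2]
    rw [← Finset.sum_sub_distrib]
    refine (Finset.sum_le_sum fun b1 _ => this b1).trans (le_of_eq ?_)
    rw [← Finset.mul_sum, hp.2, mul_one]
  unfold betaI mutualInfoMAC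
  simp only [hrdef, hsdef] at f
  linarith

lemma bdd_info {d1 d2 dO : ℕ}
    (N : Fin dO → Fin d1 → Fin d2 → ℝ)
    (hNnn : ∀ z b1 b2, 0 ≤ N z b1 b2)
    (hNsum : ∀ b1 b2, ∑ z, N z b1 b2 = 1) (q : Fin d2 → ℝ) (hq : inSimplex q) :
    BddAbove {y | ∃ p : Fin d1 → ℝ, inSimplex p ∧ y = mutualInfoMAC N p q} := by
  refine ⟨∑ _z : Fin dO, (1 : ℝ), ?_⟩
  rintro y ⟨p, hp, rfl⟩
  have hr := out_simplex N hNnn hNsum p q hp hq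
  unfold mutualInfoMAC
  have h1 : 0 ≤ ∑ b1, (∑ b2, q b2 * ∑ z, Real.negMulLog (N z b1 b2)) * p b1 :=
    Finset.sum_nonneg fun b1 _ => mul_nonneg (Finset.sum_nonneg fun b2 _ =>
      mul_nonneg (hq.1 _) (ent_nonneg N hNnn hNsum b1 b2)) (hp.1 _)
  have h2 : ∀ x : ℝ, 0 ≤ x → Real.negMulLog x ≤ 1 := by
    intro x hx
    rcases hx.eq_or_lt with h | h
    · simp [← h]
    · have := Real.one_sub_inv_le_log_of_pos h
      have h3 := mul_le_mul_of_nonneg_left this hx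
      rw [mul_sub, mul_inv_cancel₀ h.ne'] at h3
      unfold Real.negMulLog
      linarith
  have h3 := Finset.sum_le_sum fun z (_ : z ∈ Finset.univ) => h2 _ (hr.1 z)
  linarith

lemma sup_side {d1 d2 dO : ℕ} (h1 : 2 ≤ d1) (hO : 2 ≤ dO)
    (N : Fin dO → Fin d1 → Fin d2 → ℝ)
    (hNnn : ∀ z b1 b2, 0 ≤ N z b1 b2)
    (hNsum : ∀ b1 b2, ∑ z, N z b1 b2 = 1)
    (q q' : Fin d2 → ℝ) (hq : inSimplex q) (hq' : inSimplex q') :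
    sSup {y | ∃ p : Fin d1 → ℝ, inSimplex p ∧ y = mutualInfoMAC N p q} -
        sSup {y | ∃ p : Fin d1 → ℝ, inSimplex p ∧ y = mutualInfoMAC N p q'} ≤
        betaI N (∑ i, |q i - q' i|) := by
  rw [sub_le_iff_le_add]
  apply csSup_le
  · refine ⟨_, fun i => if i = ⟨0, by omega⟩ then 1 else 0, ⟨fun i => ?_, ?_⟩, rfl⟩
    · dsimp only
      split_ifs <;> norm_num
    · simp
  · rintro y ⟨p, hp, rfl⟩
    have a := one_side hO N hNnn hNsum p hp q q' hq hq'
    have b := le_csSup (bdd_info N hNnn hNsum q' hq') ⟨p, hp, rfl⟩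
    linarith

theorem stmt5 (d1 d2 dO : ℕ) (h1 : 2 ≤ d1) (h2 : 2 ≤ d2) (hO : 2 ≤ dO)
    (N : Fin dO → Fin d1 → Fin d2 → ℝ)
    (hNnn : ∀ z b1 b2, 0 ≤ N z b1 b2)
    (hNsum : ∀ b1 b2, ∑ z, N z b1 b2 = 1) :
    (∀ p : Fin d1 → ℝ, inSimplex p → ∀ q q' : Fin d2 → ℝ, inSimplex q → inSimplex q' →
      |mutualInfoMAC N p q - mutualInfoMAC N p q'| ≤ betaI N (∑ i, |q i - q' i|)) ∧
    (∀ q q' : Fin d2 → ℝ, inSimplex q → inSimplex q' →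
      |sSup {y | ∃ p : Fin d1 → ℝ, inSimplex p ∧ y = mutualInfoMAC N p q} -
        sSup {y | ∃ p : Fin d1 → ℝ, inSimplex p ∧ y = mutualInfoMAC N p q'}| ≤
        betaI N (∑ i, |q i - q' i|)) := by
  have sym : ∀ q q' : Fin d2 → ℝ, ∑ i, |q i - q' i| = ∑ i, |q' i - q i| := fun q q' =>
    Finset.sum_congr rfl fun i _ => abs_sub_comm _ _
  constructor
  · intro p hp q q' hq hq'
    rw [abs_sub_le_iff]
    refine ⟨one_side hO N hNnn hNsum p hp q q' hq hq', ?_⟩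
    rw [sym]
    exact one_side hO N hNnn hNsum p hp q' q hq' hq
  · intro q q' hq hq'
    rw [abs_sub_le_iff]
    refine ⟨sup_side h1 hO N hNnn hNsum q q' hq hq', ?_⟩
    rw [sym]
    exact sup_side h1 hO N hNnn hNsum q' q hq' hq
end

section
/- For all x, y ∈ ℝ with x, y ≥ 0, the modified binary entropy satisfies |h̄(x) − h̄(y)| ≤ h̄(|x − y|). In particular, h̄ is an h̄-Lipschitz-like function on ℝ₊. -/
lemma hbar_le {x : ℝ} (h : x ≤ 1 / 2) : hbar x = Real.binEntropy x := by
  rw [hbar, if_pos h, Real.binEntropy_eq_negMulLog_add_negMulLog_one_sub]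

lemma hbar_ge {x : ℝ} (h : 1 / 2 ≤ x) : hbar x = Real.log 2 := by
  rcases h.eq_or_lt with h | h
  · rw [← h, hbar_le le_rfl, one_div, Real.binEntropy_two_inv]
  · rw [hbar, if_neg (not_le.2 h)]

lemma hbar_le_log (x : ℝ) : hbar x ≤ Real.log 2 := by
  rcases le_total x (1 / 2) with h | h
  · rw [hbar_le h]; exact Real.binEntropy_le_log_two
  · rw [hbar_ge h]

lemma hbar_mono {x y : ℝ} (hx : 0 ≤ x) (hxy : x ≤ y) : hbar x ≤ hbar y := by
  rcases le_total y (1 / 2) with h | h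
  · rw [hbar_le h, hbar_le (hxy.trans h)]
    apply Real.binEntropy_strictMonoOn.monotoneOn _ _ hxy
    · constructor <;> norm_num at * <;> linarith
    · constructor <;> norm_num at * <;> linarith
  · rw [hbar_ge h]; exact hbar_le_log x

lemma hbar_nonneg {x : ℝ} (hx : 0 ≤ x) : 0 ≤ hbar x := by
  have := hbar_mono le_rfl hx
  rw [hbar_le (by norm_num : (0 : ℝ) ≤ 1 / 2), Real.binEntropy_zero] at this
  exact this

lemma binEntropy_scale {a s : ℝ} (ha : 0 ≤ a) (has : a ≤ s) (hs : 0 < s) (hs1 : s ≤ 1) :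
    a / s * Real.binEntropy s ≤ Real.binEntropy a := by
  have h0 : s ∈ Set.Icc (0 : ℝ) 1 := ⟨hs.le, hs1⟩
  have h00 : (0 : ℝ) ∈ Set.Icc (0 : ℝ) 1 := ⟨le_rfl, zero_le_one⟩
  have p1 : 0 ≤ a / s := by positivity
  have p2 : 0 ≤ 1 - a / s := by rw [sub_nonneg, div_le_one hs]; exact has
  have h := Real.strictConcave_binEntropy.concaveOn.2 h0 h00 p1 p2 (by ring)
  simp only [smul_eq_mul, Real.binEntropy_zero, mul_zero, add_zero] at h
  rwa [div_mul_cancel₀ a hs.ne'] at h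

lemma binEntropy_subadd {a d : ℝ} (ha : 0 ≤ a) (hd : 0 ≤ d) (h1 : a + d ≤ 1) :
    Real.binEntropy (a + d) ≤ Real.binEntropy a + Real.binEntropy d := by
  rcases (add_nonneg ha hd).eq_or_lt with h | h
  · rw [← h, Real.binEntropy_zero]
    exact add_nonneg (Real.binEntropy_nonneg ha (by linarith))
      (Real.binEntropy_nonneg hd (by linarith))
  · have e1 := binEntropy_scale ha (by linarith) h h1
    have e2 := binEntropy_scale hd (by linarith) h h1
    have e3 : a / (a + d) + d / (a + d) = 1 := by field_simp
    calc _ = (a / (a + d) + d / (a + d)) * Real.binEntropy (a + d) := by rw [e3, one_mul]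
      _ ≤ _ := by rw [add_mul]; linarith

lemma hbar_subadd {a d : ℝ} (ha : 0 ≤ a) (hd : 0 ≤ d) :
    hbar (a + d) ≤ hbar a + hbar d := by
  rcases le_total (1 / 2) d with h | h
  · rw [hbar_ge h]; linarith [hbar_le_log (a + d), hbar_nonneg ha]
  rcases le_total (a + d) (1 / 2) with h2 | h2
  · rw [hbar_le h2, hbar_le h, hbar_le (by linarith : a ≤ 1 / 2)]
    exact binEntropy_subadd ha hd (by linarith)
  · have e := binEntropy_subadd (a := 1 / 2 - d) (by linarith) hd (by linarith)
    rw [sub_add_cancel, ← hbar_le h, ← hbar_le le_rfl,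
      ← hbar_le (by linarith : 1 / 2 - d ≤ 1 / 2), hbar_ge le_rfl] at e
    have := hbar_mono (by linarith : 0 ≤ 1 / 2 - d) (by linarith : 1 / 2 - d ≤ a)
    linarith [hbar_le_log (a + d)]

lemma hbar_aux {x y : ℝ} (hx : 0 ≤ x) (hxy : x ≤ y) : |hbar y - hbar x| ≤ hbar |y - x| := by
  rw [abs_of_nonneg (sub_nonneg.2 (hbar_mono hx hxy)), abs_of_nonneg (sub_nonneg.2 hxy)]
  have := hbar_subadd hx (sub_nonneg.2 hxy)
  rw [add_sub_cancel] at this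
  linarith

theorem stmt6 (x y : ℝ) (hx : 0 ≤ x) (hy : 0 ≤ y) :
    |hbar x - hbar y| ≤ hbar |x - y| := by
  rcases le_total x y with h | h
  · rw [abs_sub_comm, abs_sub_comm x y]; exact hbar_aux hx h
  · exact hbar_aux hy h
end

section
/- Let D ⊆ ℝ^d be a nonempty compact convex set, let ‖·‖ be a norm on ℝ^d, and let c₁, c₂ > 0 satisfy c₁‖x‖ ≤ ‖x‖₂ ≤ c₂‖x‖ for all x ∈ ℝ^d; set C = c₂/c₁. Let β and κ be admissible moduli with |β(s) − β(t)| ≤ κ(|s − t|) for all s, t ≥ 0, and let f: D → ℝ satisfy |f(x) − f(y)| ≤ β(‖x − y‖) for all x, y ∈ D. Let Π: ℝ^d → ℝ^d be the Euclidean metric projection onto D, i.e., Π(x) ∈ D with ‖x − Π(x)‖₂ ≤ ‖x − z‖₂ for all z ∈ D, and assume ‖Π(x) − Π(y)‖₂ ≤ ‖x − y‖₂ for all x, y ∈ ℝ^d. Define the extension f̄(x) = f(Π(x)) − β(‖x − Π(x)‖). Then for all x, y ∈ ℝ^d, |f̄(x) − f̄(y)| ≤ β(C‖x − y‖) + κ((C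 + 1)‖x − y‖). -/
/-- An admissible modulus: non-negative, continuous, monotonically increasing on ℝ₊,
vanishing at 0. -/
def AdmissibleModulus (β : ℝ → ℝ) : Prop :=
  (∀ x, 0 ≤ x → 0 ≤ β x) ∧ ContinuousOn β (Set.Ici 0) ∧
    (∀ x y, 0 ≤ x → x ≤ y → β x ≤ β y) ∧ β 0 = 0

theorem stmt7 (d : ℕ) (D : Set (EuclideanSpace ℝ (Fin d)))
    (hD : D.Nonempty) (hDc : IsCompact D) (hDconv : Convex ℝ D)
    (nrm : Seminorm ℝ (EuclideanSpace ℝ (Fin d))) (hnrm : ∀ x, nrm x = 0 → x = 0)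
    (c1 c2 : ℝ) (hc1 : 0 < c1) (hc2 : 0 < c2)
    (hlow : ∀ x, c1 * nrm x ≤ ‖x‖) (hhigh : ∀ x, ‖x‖ ≤ c2 * nrm x)
    (C : ℝ) (hC : C = c2 / c1)
    (β κ : ℝ → ℝ) (hβ : AdmissibleModulus β) (hκ : AdmissibleModulus κ)
    (hβκ : ∀ s t : ℝ, 0 ≤ s → 0 ≤ t → |β s - β t| ≤ κ |s - t|)
    (f : EuclideanSpace ℝ (Fin d) → ℝ)
    (hf : ∀ x ∈ D, ∀ y ∈ D, |f x - f y| ≤ β (nrm (x - y)))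
    (proj : EuclideanSpace ℝ (Fin d) → EuclideanSpace ℝ (Fin d))
    (hprojD : ∀ x, proj x ∈ D)
    (hproj : ∀ x, ∀ z ∈ D, ‖x - proj x‖ ≤ ‖x - z‖)
    (hnonexp : ∀ x y, ‖proj x - proj y‖ ≤ ‖x - y‖)
    (fbar : EuclideanSpace ℝ (Fin d) → ℝ)
    (hfbar : ∀ x, fbar x = f (proj x) - β (nrm (x - proj x))) :
    ∀ x y, |fbar x - fbar y| ≤ β (C * nrm (x - y)) + κ ((C + 1) * nrm (x - y)) := by
  intro x y
  obtain ⟨-, -, hβm, -⟩ := hβ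
  obtain ⟨-, -, hκm, -⟩ := hκ
  have h1 : nrm (proj x - proj y) ≤ C * nrm (x - y) := by
    rw [hC, div_mul_eq_mul_div, le_div_iff₀ hc1, mul_comm]
    exact (hlow _).trans ((hnonexp x y).trans (hhigh _))
  have h2 : |nrm (x - proj x) - nrm (y - proj y)| ≤ (C + 1) * nrm (x - y) := by
    have h3 := abs_sub_map_le_sub nrm (x - proj x) (y - proj y)
    have h4 : x - proj x - (y - proj y) = (x - y) - (proj x - proj y) := by abel
    rw [h4] at h3
    have h5 := map_sub_le_add nrm (x - y) (proj x - proj y)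
    linarith
  have h6 := (hf _ (hprojD x) _ (hprojD y)).trans (hβm _ _ (apply_nonneg nrm _) h1)
  have h7 := (hβκ _ _ (apply_nonneg nrm (x - proj x)) (apply_nonneg nrm (y - proj y))).trans
    (hκm _ _ (abs_nonneg _) h2)
  rw [hfbar, hfbar]
  rw [abs_le] at h6 h7 ⊢
  constructor <;> linarith [h6.1, h6.2, h7.1, h7.2]
end

section
/- Let d ≥ 1 and N ≥ 1 be integers. For every x in the standard simplex Δ_d there exists n ∈ ℕ^d with Σ_{i=1}^d n_i = N such that ‖x − n/N‖₁ ≤ 2(d − 1)/N. That is, the grid Δ_{d,N} = {n/N : n ∈ ℕ^d, Σ_i n_i = N} is a (2(d−1)/N)-net of Δ_d in the l₁-norm. -/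
theorem stmt11 (d N : ℕ) (hd : 1 ≤ d) (hN : 1 ≤ N)
    (x : Fin d → ℝ) (hx : inSimplex x) :
    ∃ n : Fin d → ℕ, (∑ i, n i = N) ∧
      ∑ i, |x i - (n i : ℝ) / N| ≤ 2 * ((d : ℝ) - 1) / N := by
  obtain ⟨k, rfl⟩ : ∃ k, d = k + 1 := ⟨d - 1, by omega⟩
  obtain ⟨h0, h1⟩ := hx
  rw [Fin.sum_univ_succ] at h1
  have hNp : (0 : ℝ) < N := by exact_mod_cast hN
  let m : Fin k → ℕ := fun i => ⌊(N : ℝ) * x i.succ⌋₊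
  have hm1 : ∀ i, (m i : ℝ) / N ≤ x i.succ := fun i => by
    rw [div_le_iff₀ hNp, mul_comm]
    exact Nat.floor_le (mul_nonneg hNp.le (h0 _))
  have hm2 : ∀ i, x i.succ - (m i : ℝ) / N ≤ 1 / N := fun i => by
    rw [sub_le_iff_le_add, ← add_div, le_div_iff₀ hNp, mul_comm, add_comm]
    exact (Nat.lt_floor_add_one _).le
  have hs : (∑ i, (m i : ℝ)) / N ≤ ∑ i : Fin k, x i.succ := by
    rw [Finset.sum_div]
    exact Finset.sum_le_sum fun i _ => hm1 i
  have hle : ∑ i, m i ≤ N := by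
    have h2 : (∑ i, (m i : ℝ)) / N ≤ 1 := by linarith [h0 0]
    rw [div_le_one hNp] at h2
    exact_mod_cast h2
  refine ⟨Fin.cons (N - ∑ i, m i) m, ?_, ?_⟩
  · rw [Fin.sum_univ_succ]
    simp only [Fin.cons_zero, Fin.cons_succ]
    omega
  · rw [Fin.sum_univ_succ]
    simp only [Fin.cons_zero, Fin.cons_succ]
    have e1 : ∑ i : Fin k, |x i.succ - (m i : ℝ) / N|
        = ∑ i : Fin k, (x i.succ - (m i : ℝ) / N) :=
      Finset.sum_congr rfl fun i _ => abs_of_nonneg (sub_nonneg.2 (hm1 i))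
    have e2 : ∑ i : Fin k, (x i.succ - (m i : ℝ) / N) ≤ k * (1 / N) := by
      refine (Finset.sum_le_sum fun i _ => hm2 i).trans ?_
      simp
    have e3 : x 0 - ((N - ∑ i, m i : ℕ) : ℝ) / N
        = -(∑ i : Fin k, (x i.succ - (m i : ℝ) / N)) := by
      rw [Nat.cast_sub hle, Nat.cast_sum, sub_div, div_self hNp.ne', Finset.sum_sub_distrib,
        ← Finset.sum_div]
      linarith
    have e4 : 0 ≤ ∑ i : Fin k, (x i.succ - (m i : ℝ) / N) :=
      Finset.sum_nonneg fun i _ => sub_nonneg.2 (hm1 i)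
    rw [e1, e3, abs_neg, abs_of_nonneg e4]
    have e5 : 2 * (((k + 1 : ℕ) : ℝ) - 1) / N = 2 * (k * (1 / N)) := by
      push_cast
      ring
    rw [e5]
    linarith
end

section
/- Let d ≥ 2 and N ≥ 1 be integers, let I_{d,N} = {n ∈ ℕ^d : Σ_{i=1}^d n_i = N}, and let M = binom(N + d − 1, d − 1), which equals |I_{d,N}|. Then there exists a bijection e: {0, 1, …, M−1} → I_{d,N} such that e(0) = (N, 0, …, 0), e(M−1) = (0, …, 0, N), and ‖e(k+1) − e(k)‖₁ = 2 for every k ∈ {0, …, M−2}. That is, the integer grid I_{d,N} can be ordered so that any two consecutive elements are at l₁-distance exactly 2. -/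
def adjV {d : ℕ} (u v : Fin d → ℕ) : Prop := ∑ i, |(v i : ℝ) - (u i : ℝ)| = 2

lemma adjV_symm {d : ℕ} {u v : Fin d → ℕ} (h : adjV u v) : adjV v u := by
  unfold adjV at *
  rw [← h]
  exact Finset.sum_congr rfl fun i _ => abs_sub_comm _ _

lemma adjV_cons {d : ℕ} {u v : Fin d → ℕ} (a : ℕ) (h : adjV u v) :
    adjV (Fin.cons a u : Fin (d+1) → ℕ) (Fin.cons a v) := by
  unfold adjV at *
  rw [Fin.sum_univ_succ]
  simpa using h

lemma adjV_step {d : ℕ} (a m : ℕ) (j : Fin d) :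
    adjV (Fin.cons (a+1) (Pi.single j m) : Fin (d+1) → ℕ) (Fin.cons a (Pi.single j (m+1))) := by
  unfold adjV
  rw [Fin.sum_univ_succ, Finset.sum_eq_single j]
  · simp; norm_num
  · intro b _ hb
    simp [hb]
  · simp

def GoodL (d N : ℕ) (s t : Fin (d+1) → ℕ) (l : List (Fin (d+1) → ℕ)) : Prop :=
  l.length = Nat.choose (N + d) d ∧ l.Nodup ∧ (∀ v, v ∈ l ↔ ∑ i, v i = N) ∧
  l.head? = some s ∧ l.getLast? = some t ∧ l.IsChain adjV

lemma GoodL.rev {d N : ℕ} {s t : Fin (d+1) → ℕ} {l : List (Fin (d+1) → ℕ)} (h : GoodL d N s t l) :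
    GoodL d N t s l.reverse := by
  obtain ⟨h1, h2, h3, h4, h5, h6⟩ := h
  refine ⟨by simpa, by simpa using h2, by simpa using h3, by simpa using h5, by simpa using h4, ?_⟩
  rw [List.isChain_reverse]
  exact h6.imp fun _ _ h => adjV_symm h

lemma inner (d N : ℕ)
    (ih : ∀ m, ∃ l, GoodL d m (Pi.single 0 m) (Pi.single (Fin.last d) m) l) (m : ℕ) (hm : m ≤ N) :
    ∃ l : List (Fin (d+2) → ℕ), l.length = Nat.choose (m + (d+1)) (d+1) ∧ l.Nodup ∧
      (∀ v, v ∈ l ↔ ∑ i, v i = N ∧ N ≤ v 0 + m) ∧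
      l.head? = some (Pi.single 0 N) ∧
      l.getLast? = some (Fin.cons (N - m)
        (Pi.single (if Even (N - m) then Fin.last d else 0) m : Fin (d+1) → ℕ)) ∧
      l.IsChain adjV := by
  induction m with
  | zero =>
    have key : ∀ v : Fin (d+2) → ℕ, v = Pi.single 0 N ↔ ∑ i, v i = N ∧ N ≤ v 0 + 0 := by
      intro v
      constructor
      · rintro rfl
        simp
      · rintro ⟨h1, h2⟩
        rw [Fin.sum_univ_succ] at h1
        have h3 : ∑ i : Fin (d+1), v i.succ = 0 := by omega
        rw [Finset.sum_eq_zero_iff] at h3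
        funext i
        refine Fin.cases ?_ (fun i => ?_) i
        · simp; omega
        · simpa using h3 i (Finset.mem_univ _)
    refine ⟨[Pi.single 0 N], by simp, by simp, fun v => by rw [← key]; simp, by simp, ?_, by simp⟩
    simp only [List.getLast?_singleton, Option.some.injEq]
    funext i
    refine Fin.cases ?_ (fun i => ?_) i <;> simp
  | succ m ihm =>
    obtain ⟨l, h1, h2, h3, h4, h5, h6⟩ := ihm (by omega)
    obtain ⟨a, ha⟩ : ∃ a, N = a + (m+1) := ⟨N - (m+1), by omega⟩
    have e1 : N - m = a + 1 := by omega
    have e2 : N - (m+1) = a := by omega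
    rw [e1] at h5
    rw [e2]
    -- block
    obtain ⟨b, g1, g2, g3, g4, g5, g6⟩ : ∃ b, GoodL d (m+1)
        (Pi.single (if Even (a+1) then Fin.last d else 0) (m+1))
        (Pi.single (if Even a then Fin.last d else 0) (m+1)) b := by
      obtain ⟨b, hb⟩ := ih (m+1)
      by_cases h : Even a
      · have : ¬ Even (a+1) := by simpa [Nat.even_add_one] using h
        rw [if_pos h, if_neg this]
        exact ⟨b, hb⟩
      · have : Even (a+1) := by simpa [Nat.even_add_one] using h
        rw [if_neg h, if_pos this]
        exact ⟨_, hb.rev⟩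
    have hmem : ∀ v : Fin (d+2) → ℕ, v ∈ b.map (fun w => (Fin.cons a w : Fin (d+2) → ℕ)) ↔
        v 0 = a ∧ ∑ i, v i = N := by
      intro v
      rw [List.mem_map]
      constructor
      · rintro ⟨w, hw, rfl⟩
        rw [g3] at hw
        rw [Fin.sum_univ_succ]
        simp [hw, ha]
      · rintro ⟨q1, q2⟩
        rw [Fin.sum_univ_succ] at q2
        refine ⟨Fin.tail v, ?_, ?_⟩
        · rw [g3]
          simp only [Fin.tail]
          omega
        · rw [← q1]; exact Fin.cons_self_tail v
    refine ⟨l ++ b.map (fun w => (Fin.cons a w : Fin (d+2) → ℕ)), ?_, ?_, ?_, ?_, ?_, ?_⟩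
    · rw [List.length_append, List.length_map, h1, g1]
      have := Nat.choose_succ_succ (m + 1 + d) d
      rw [show m + 1 + (d+1) = (m + 1 + d).succ by omega, this,
        show m + (d+1) = m + 1 + d by omega]
      simp [Nat.succ_eq_add_one]; omega
    · rw [List.nodup_append']
      refine ⟨h2, g2.map (Fin.cons_right_injective (α := fun _ => ℕ) a), ?_⟩
      intro v hv hv'
      rw [h3] at hv
      rw [hmem] at hv'
      omega
    · intro v
      rw [List.mem_append, h3, hmem]
      have : v 0 ≤ ∑ i, v i := Finset.single_le_sum (f := v) (fun _ _ => Nat.zero_le _) (Finset.mem_univ 0)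
      omega
    · simp [h4]
    · simp [g5]
    · rw [List.isChain_append]
      refine ⟨h6, ?_, ?_⟩
      · rw [List.isChain_map]
        exact g6.imp fun _ _ h => adjV_cons a h
      · intro x hx y hy
        rw [h5] at hx
        rw [List.head?_map, g4] at hy
        simp only [Option.map_some, Option.mem_def, Option.some.injEq] at hx hy
        subst hx hy
        exact adjV_step _ _ _

lemma outer (d : ℕ) : ∀ N, ∃ l, GoodL d N (Pi.single 0 N) (Pi.single (Fin.last d) N) l := by
  induction d with
  | zero =>
    intro N
    refine ⟨[Pi.single 0 N], by simp, by simp, fun v => ?_, by simp, by simp, by simp⟩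
    simp only [List.mem_singleton]
    constructor
    · rintro rfl; simp
    · intro h
      funext i
      have hi : i = 0 := Fin.ext (by have := i.2; simp at this ⊢)
      subst hi
      simpa using h
  | succ d ih =>
    intro N
    obtain ⟨l, h1, h2, h3, h4, h5, h6⟩ := inner d N ih N le_rfl
    refine ⟨l, h1, h2, fun v => by rw [h3]; simp, h4, ?_, h6⟩
    rw [h5]
    simp only [Option.some.injEq, Nat.sub_self, Even.zero, if_true]
    funext i
    refine Fin.cases ?_ (fun i => ?_) i
    · simp [Pi.single_apply, Fin.ext_iff]
    · simp [Pi.single_apply, Fin.ext_iff]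

theorem stmt12 (d N : ℕ) (hd : 2 ≤ d) (hN : 1 ≤ N)
    (M : ℕ) (hM : M = Nat.choose (N + d - 1) (d - 1)) :
    ∃ e : ℕ → Fin d → ℕ,
      (∀ k < M, ∑ i, e k i = N) ∧
      (∀ k < M, ∀ l < M, e k = e l → k = l) ∧
      (∀ n : Fin d → ℕ, (∑ i, n i = N) → ∃ k < M, e k = n) ∧
      (e 0 = fun i : Fin d => if (i : ℕ) = 0 then N else 0) ∧
      (e (M - 1) = fun i : Fin d => if (i : ℕ) = d - 1 then N else 0) ∧
      ∀ k, k + 1 < M → ∑ i, |((e (k + 1) i : ℝ)) - (e k i : ℝ)| = 2 := by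
  obtain ⟨d, rfl⟩ : ∃ c, d = c + 1 := ⟨d - 1, by omega⟩
  obtain ⟨l, h1, h2, h3, h4, h5, h6⟩ := outer d N
  have hl : l.length = M := by rw [h1, hM]; rfl
  have hget : ∀ k, (hk : k < M) → l.getD k 0 = l[k]'(by omega) := by
    intro k hk
    exact List.getD_eq_getElem _ _ _
  refine ⟨fun k => l.getD k 0, ?_, ?_, ?_, ?_, ?_, ?_⟩
  · intro k hk
    simp only [hget k hk]
    exact (h3 _).1 (List.getElem_mem _)
  · intro k hk j hj h
    simp only [hget k hk, hget j hj] at h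
    exact (h2.getElem_inj_iff).1 h
  · intro n hn
    obtain ⟨k, hk, h⟩ := List.getElem_of_mem ((h3 n).2 hn)
    exact ⟨k, by omega, by simp only [hget k (by omega), h]⟩
  · rw [List.head?_eq_getElem?] at h4
    simp only [List.getD_eq_getElem?_getD, h4, Option.getD_some]
    funext i
    simp only [Pi.single_apply, Fin.ext_iff, Fin.val_zero, Fin.val_last, Nat.add_sub_cancel]
  · rw [List.getLast?_eq_getElem?, hl] at h5
    simp only [List.getD_eq_getElem?_getD, h5, Option.getD_some]
    funext i
    simp only [Pi.single_apply, Fin.ext_iff, Fin.val_zero, Fin.val_last, Nat.add_sub_cancel]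
  · intro k hk
    have q1 := hget k (by omega)
    have q2 := hget (k+1) hk
    beta_reduce
    rw [q1, q2]
    exact List.isChain_iff_getElem.1 h6 k (by omega)
end

section
/- Let X₁ and X₂ be nonempty finite sets. Then the maximum over all pairs of functions f₁: X₁ → X₂ and f₂: X₂ → X₁ of the quantity |{(x₁, x₂) ∈ X₁ × X₂ : f₁(x₁) = x₂ and f₂(x₂) = x₁}| equals min(|X₁|, |X₂|). Consequently, the maximum winning probability of the signalling game under uniformly drawn questions using classical deterministic strategies equals min(|X₁|,|X₂|)/(|X₁|·|X₂|) = 1/max(|X₁|, |X₂|). -/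
theorem stmt16 (X₁ X₂ : Type*) [Fintype X₁] [Fintype X₂] [Nonempty X₁] [Nonempty X₂]
    [DecidableEq X₁] [DecidableEq X₂] :
    IsGreatest
        {k : ℕ | ∃ (f₁ : X₁ → X₂) (f₂ : X₂ → X₁),
          k = (Finset.univ.filter
                (fun p : X₁ × X₂ => f₁ p.1 = p.2 ∧ f₂ p.2 = p.1)).card}
        (min (Fintype.card X₁) (Fintype.card X₂)) ∧
      ((min (Fintype.card X₁) (Fintype.card X₂) : ℝ) /
          ((Fintype.card X₁ : ℝ) * (Fintype.card X₂ : ℝ)) =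
        1 / (max (Fintype.card X₁) (Fintype.card X₂) : ℝ)) := by
  refine ⟨⟨?_, ?_⟩, ?_⟩
  · rcases le_total (Fintype.card X₁) (Fintype.card X₂) with h | h
    · obtain ⟨e⟩ := Function.Embedding.nonempty_of_card_le h
      refine ⟨e, Function.invFun e, ?_⟩
      rw [min_eq_left h, ← Finset.card_univ,
        ← Finset.card_image_of_injective (f := fun x => (x, e x)) Finset.univ
          (fun a b hab => (Prod.mk.inj hab).1)]
      congr 1
      ext ⟨a, b⟩
      simp only [Finset.mem_image, Finset.mem_univ, true_and, Finset.mem_filter, Prod.mk.injEq]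
      constructor
      · rintro ⟨x, rfl, rfl⟩
        exact ⟨rfl, Function.leftInverse_invFun e.injective x⟩
      · rintro ⟨h1, -⟩
        exact ⟨a, rfl, h1⟩
    · obtain ⟨e⟩ := Function.Embedding.nonempty_of_card_le h
      refine ⟨Function.invFun e, e, ?_⟩
      rw [min_eq_right h, ← Finset.card_univ,
        ← Finset.card_image_of_injective (f := fun x => (e x, x)) Finset.univ
          (fun a b hab => (Prod.mk.inj hab).2)]
      congr 1
      ext ⟨a, b⟩
      simp only [Finset.mem_image, Finset.mem_univ, true_and, Finset.mem_filter, Prod.mk.injEq]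
      constructor
      · rintro ⟨x, rfl, rfl⟩
        exact ⟨Function.leftInverse_invFun e.injective x, rfl⟩
      · rintro ⟨-, h1⟩
        exact ⟨b, h1, rfl⟩
  · rintro k ⟨f₁, f₂, rfl⟩
    refine le_min ?_ ?_
    · rw [← Finset.card_univ]
      refine Finset.card_le_card_of_injOn Prod.fst (fun _ _ => Finset.mem_coe.2 (Finset.mem_univ _)) ?_
      rintro ⟨a, b⟩ h ⟨c, d⟩ h' hac
      simp at h h' hac
      grind
    · rw [← Finset.card_univ]
      refine Finset.card_le_card_of_injOn Prod.snd (fun _ _ => Finset.mem_coe.2 (Finset.mem_univ _)) ?_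
      rintro ⟨a, b⟩ h ⟨c, d⟩ h' hac
      simp at h h' hac
      grind
  · have h1 : (0 : ℝ) < Fintype.card X₁ := by exact_mod_cast Fintype.card_pos
    have h2 : (0 : ℝ) < Fintype.card X₂ := by exact_mod_cast Fintype.card_pos
    rw [← min_mul_max (Fintype.card X₁ : ℝ) (Fintype.card X₂ : ℝ)]
    have h3 := lt_min h1 h2
    have h4 := lt_max_of_lt_left (c := (Fintype.card X₂ : ℝ)) h1
    field_simp
end

section
/- Define I₁: [0,1] × [0,1] → ℝ by I₁(p,q) = −((1+pq)/2)·ln((1+pq)/2) − ((1−pq)/2)·ln((1−pq)/2) − (1−pq)·ln 2, with the convention 0·ln 0 := 0. Then sup_{(p,q) ∈ [0,1]²} I₁(p,q) = h(4/5) − (2/5)·ln 2, where h(x) = −x ln x − (1−x) ln(1−x), and the supremum is attained at every (p,q) ∈ [0,1]² with pq = 3/5. -/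
/-- The mutual information (in nats) of the noise-free subspace MAC N_F^(1) for
product input distributions (p, 1−p) ⊗ (q, 1−q), with 0·ln 0 := 0. -/
noncomputable def I1 (p q : ℝ) : ℝ :=
  Real.negMulLog ((1 + p * q) / 2) + Real.negMulLog ((1 - p * q) / 2) -
    (1 - p * q) * Real.log 2

/-- The binary entropy in nats, with 0·ln 0 := 0. -/
noncomputable def binEnt (x : ℝ) : ℝ := Real.negMulLog x + Real.negMulLog (1 - x)

theorem tangent_aux (x a : ℝ) (hx : 0 ≤ x) (ha : 0 < a) :
    Real.negMulLog x ≤ -x * Real.log a + a - x := by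
  rcases hx.eq_or_lt with h | h
  · subst h
    simp [ha.le]
  · have h1 := Real.log_le_sub_one_of_pos (div_pos ha h)
    rw [Real.log_div ha.ne' h.ne'] at h1
    have h2 := mul_le_mul_of_nonneg_left h1 h.le
    have h3 : x * (a / x - 1) = a - x := by field_simp
    unfold Real.negMulLog
    linarith

theorem stmt18 :
    IsGreatest {y | ∃ p ∈ Set.Icc (0 : ℝ) 1, ∃ q ∈ Set.Icc (0 : ℝ) 1, y = I1 p q}
        (binEnt (4 / 5) - (2 / 5) * Real.log 2) ∧
      ∀ p ∈ Set.Icc (0 : ℝ) 1, ∀ q ∈ Set.Icc (0 : ℝ) 1, p * q = 3 / 5 →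
        I1 p q = binEnt (4 / 5) - (2 / 5) * Real.log 2 := by
  have key : ∀ p ∈ Set.Icc (0 : ℝ) 1, ∀ q ∈ Set.Icc (0 : ℝ) 1, p * q = 3 / 5 →
        I1 p q = binEnt (4 / 5) - (2 / 5) * Real.log 2 := by
    intro p _ q _ h
    unfold I1 binEnt
    rw [h]
    norm_num
  refine ⟨⟨⟨3 / 5, by norm_num, 1, by norm_num,
    (key (3 / 5) (by norm_num) 1 (by norm_num) (by norm_num)).symm⟩, ?_⟩, key⟩
  rintro y ⟨p, ⟨hp0, hp1⟩, q, ⟨hq0, hq1⟩, rfl⟩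
  have ht0 : 0 ≤ p * q := mul_nonneg hp0 hq0
  have ht1 : p * q ≤ 1 := mul_le_one₀ hp1 hq0 hq1
  have l4 : Real.log (4 / 5) = 2 * Real.log 2 - Real.log 5 := by
    rw [Real.log_div (by norm_num) (by norm_num), show (4 : ℝ) = 2 ^ 2 by norm_num,
      Real.log_pow]
    norm_num
  have l5 : Real.log (1 / 5) = - Real.log 5 := by
    rw [one_div, Real.log_inv]
  have h1 := tangent_aux ((1 + p * q) / 2) (4 / 5) (by linarith) (by norm_num)
  have h2 := tangent_aux ((1 - p * q) / 2) (1 / 5) (by linarith) (by norm_num)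
  have h3 : binEnt (4 / 5) = Real.log 5 - 8 / 5 * Real.log 2 := by
    unfold binEnt Real.negMulLog
    rw [show (1 : ℝ) - 4 / 5 = 1 / 5 by norm_num, l4, l5]
    ring
  rw [h3]
  rw [l4] at h1
  rw [l5] at h2
  unfold I1
  linarith
end

section
/- Define I₂: [0,1] × [0,1] → ℝ by I₂(p,q) = −((p+q)/2)·ln((p+q)/2) − (1−(p+q)/2)·ln(1−(p+q)/2) − (p + q − 2pq)·ln 2, with the convention 0·ln 0 := 0. Then sup_{(p,q) ∈ [0,1]²} I₂(p,q) = (1/2)·ln 2, and the supremum is attained at p = q = 1/2. -/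
/-- The mutual information (in nats) of the noise-free subspace MAC N_F^(2) for
product input distributions (p, 1−p) ⊗ (q, 1−q), with 0·ln 0 := 0. -/
noncomputable def I2 (p q : ℝ) : ℝ :=
  Real.negMulLog ((p + q) / 2) + Real.negMulLog (1 - (p + q) / 2) -
    (p + q - 2 * p * q) * Real.log 2

lemma aux_concave : ConcaveOn ℝ (Set.Icc (0:ℝ) 1)
    (fun s => Real.binEntropy s + 2 * (s - 1 / 2) ^ 2) := by
  refine concaveOn_of_hasDerivWithinAt2_nonpos (convex_Icc 0 1)
    (f' := fun s => Real.log (1 - s) - Real.log s + 4 * (s - 1 / 2))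
    (f'' := fun s => -1 / (1 - s) - 1 / s + 4) (by fun_prop) ?_ ?_ ?_
  · intro x hx
    rw [interior_Icc] at hx
    have h1 := Real.hasDerivAt_binEntropy hx.1.ne' hx.2.ne
    have h2 := (((hasDerivAt_id x).sub_const (1 / 2 : ℝ)).pow 2).const_mul (2 : ℝ)
    refine ((h1.add h2).congr_deriv ?_).hasDerivWithinAt
    simp
    ring
  · intro x hx
    rw [interior_Icc] at hx
    have h1 := ((hasDerivAt_id x).const_sub (1 : ℝ)).log (by simpa using (sub_pos.2 hx.2).ne')
    have h2 := (hasDerivAt_id x).log (by simpa using hx.1.ne')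
    have h3 := ((hasDerivAt_id x).sub_const (1 / 2 : ℝ)).const_mul (4 : ℝ)
    refine (((h1.sub h2).add h3).congr_deriv ?_).hasDerivWithinAt
    simp
  · intro x hx
    rw [interior_Icc] at hx
    have h0 := hx.1
    have h1 : 0 < 1 - x := sub_pos.2 hx.2
    have : -1 / (1 - x) - 1 / x + 4 = -((2 * x - 1) ^ 2 / ((1 - x) * x)) := by
      field_simp
      ring
    rw [this]
    exact neg_nonpos.2 (by positivity)

lemma aux_bound {s : ℝ} (h0 : 0 ≤ s) (h1 : s ≤ 1) :
    Real.binEntropy s + 2 * (s - 1 / 2) ^ 2 ≤ Real.log 2 := by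
  have h := aux_concave.2 (⟨h0, h1⟩ : s ∈ Set.Icc (0:ℝ) 1)
    (⟨by linarith, by linarith⟩ : 1 - s ∈ Set.Icc (0:ℝ) 1)
    (by norm_num : (0:ℝ) ≤ 1 / 2) (by norm_num : (0:ℝ) ≤ 1 / 2) (by norm_num)
  have e : (1 / 2 : ℝ) * s + 1 / 2 * (1 - s) = 2⁻¹ := by ring
  simp only [smul_eq_mul, e, Real.binEntropy_two_inv, Real.binEntropy_one_sub] at h
  linarith

theorem stmt19 :
    IsGreatest {y | ∃ p ∈ Set.Icc (0 : ℝ) 1, ∃ q ∈ Set.Icc (0 : ℝ) 1, y = I2 p q}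
        ((1 / 2) * Real.log 2) ∧
      I2 (1 / 2) (1 / 2) = (1 / 2) * Real.log 2 := by
  have hv : I2 (1 / 2) (1 / 2) = (1 / 2) * Real.log 2 := by
    have h := Real.binEntropy_two_inv
    rw [Real.binEntropy_eq_negMulLog_add_negMulLog_one_sub] at h
    have e : ((1 / 2 : ℝ) + 1 / 2) / 2 = 2⁻¹ := by norm_num
    unfold I2
    rw [e, h]
    ring
  refine ⟨⟨⟨1 / 2, by norm_num, 1 / 2, by norm_num, hv.symm⟩, ?_⟩, hv⟩
  rintro y ⟨p, ⟨hp0, hp1⟩, q, ⟨hq0, hq1⟩, rfl⟩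
  have h := aux_bound (s := (p + q) / 2) (by linarith) (by linarith)
  rw [Real.binEntropy_eq_negMulLog_add_negMulLog_one_sub] at h
  have l0 : 0 < Real.log 2 := Real.log_pos (by norm_num)
  have l1 : Real.log 2 ≤ 1 := by linarith [Real.log_two_lt_d9]
  unfold I2
  have k1 := mul_nonneg l0.le (sq_nonneg (p - q))
  have k2 := mul_nonneg (sub_nonneg.2 l1) (sq_nonneg ((p + q) / 2 - 1 / 2))
  nlinarith [k1, k2, h]
end
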